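/- There exists a constant c_p > 0 depending only on p such that if ψ̂(0) ≥ c_p·‖ψ‖₂, then there exist a constant c₁ > 0 and a time t₀ ∈ (0,T) such that for all t ∈ (t₀, T): ((p+1)/p)^{1/(p+1)}·k̂(0,t) ≤ [(T−t) − c₁·(T−t)^{1 + 2/(p+1)}]^{−1/(p+1)} and ((p+1)/p)^{1/(p+1)}·k̂(0,t) ≥ [(T−t) + c₁·(T−t)^{1 + 2/(p+1)}]^{−1/(p+1)}. -/

import Mathlib

open Real MeasureTheory Filter Set

/-- The `n`-th Fourier coefficient of a `2π`-periodic function `f : ℝ → ℝ`: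
`f̂(n) = (1/2π) ∫₀^{2π} f(θ) e^{-inθ} dθ`. -/
noncomputable def fCoeff (f : ℝ → ℝ) (n : ℤ) : ℂ :=
  (1 / (2 * Real.pi)) * ∫ θ in (0:ℝ)..(2 * Real.pi),
    (f θ : ℂ) * Complex.exp (-(Complex.I * n * θ))

/-- The seminorm `‖f‖₂ = max{sup_n n²|Re f̂(n)|, sup_n n²|Im f̂(n)|}`. -/
noncomputable def seminorm2 (f : ℝ → ℝ) : ℝ :=
  max (⨆ n : ℤ, (n : ℝ)^2 * |(fCoeff f n).re|)
      (⨆ n : ℤ, (n : ℝ)^2 * |(fCoeff f n).im|)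

/-- The `C^l[0,2π]` norm: `max_{0 ≤ j ≤ l} sup_{θ ∈ [0,2π]} |f^{(j)}(θ)|`. -/
noncomputable def ClNorm (l : ℕ) (f : ℝ → ℝ) : ℝ :=
  ⨆ j : Fin (l + 1), ⨆ θ : Set.Icc (0:ℝ) (2 * Real.pi),
    |iteratedDeriv (j : ℕ) f (θ : ℝ)|

/-- `k : ℝ × [0,T) → ℝ` is a smooth, `2π`-periodic (in space), strictly positive solution of the
`p`-curve shortening equation
`∂k/∂t = k²(k^{p-1} ∂²k/∂θ² + (p-1) k^{p-2} (∂k/∂θ)² + (1/p) k^p)`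
with initial datum `ψ` (smooth, strictly positive, `2π`-periodic), blow-up time `T`
(i.e. `sup_θ k(θ,t) → ∞` as `t → T⁻`), such that `k(·,t)` is the curvature of a simple closed
convex curve for each `t`, i.e. `∫₀^{2π} e^{iθ}/k(θ,t) dθ = 0`. -/
def IsPCSF (p : ℕ) (T : ℝ) (k : ℝ → ℝ → ℝ) (ψ : ℝ → ℝ) : Prop :=
  ContDiffOn ℝ (⊤ : ℕ∞) (fun q : ℝ × ℝ => k q.1 q.2) (Set.univ ×ˢ Set.Ico 0 T) ∧
  (∀ θ t, k (θ + 2 * Real.pi) t = k θ t) ∧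
  (∀ θ : ℝ, ∀ t ∈ Set.Ico (0:ℝ) T, 0 < k θ t) ∧
  (∀ θ : ℝ, ∀ t ∈ Set.Ico (0:ℝ) T,
    HasDerivAt (fun s => k θ s)
      ((k θ t)^2 * ((k θ t)^(p - 1) * deriv (deriv (fun x => k x t)) θ
        + ((p : ℝ) - 1) * (k θ t)^(p - 2) * (deriv (fun x => k x t) θ)^2
        + (1 / (p : ℝ)) * (k θ t)^p)) t) ∧
  (∀ θ, k θ 0 = ψ θ) ∧
  ContDiff ℝ (⊤ : ℕ∞) ψ ∧ (∀ θ, 0 < ψ θ) ∧ (∀ θ, ψ (θ + 2 * Real.pi) = ψ θ) ∧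
  Filter.Tendsto (fun t => ⨆ θ : Set.Icc (0:ℝ) (2 * Real.pi), k (θ : ℝ) t)
    (nhdsWithin T (Set.Iio T)) Filter.atTop ∧
  (∀ t ∈ Set.Ico (0:ℝ) T,
    (∫ θ in (0:ℝ)..(2 * Real.pi), Complex.exp (Complex.I * θ) / (k θ t)) = 0)

/-- The original time `t` corresponding to the rescaled time `τ`:
`t = T(1 - e^{-(p+1)τ})`, i.e. `τ = -(1/(p+1))·log(1 - t/T)`. -/
noncomputable def tOf (p : ℕ) (T τ : ℝ) : ℝ := T * (1 - Real.exp (-((p : ℝ) + 1) * τ))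

/-- The normalized curvature `k̃(θ,τ) = ((p+1)/p)^{1/(p+1)} (T-t)^{1/(p+1)} k(θ,t)`,
with `t = T(1 - e^{-(p+1)τ})`. -/
noncomputable def ktilde (p : ℕ) (T : ℝ) (k : ℝ → ℝ → ℝ) (θ τ : ℝ) : ℝ :=
  (((p : ℝ) + 1) / (p : ℝ)) ^ ((1 : ℝ) / ((p : ℝ) + 1))
    * (T - tOf p T τ) ^ ((1 : ℝ) / ((p : ℝ) + 1)) * k θ (tOf p T τ)

/-!
Let `v = k ^ p`, let `A` be the mean of `v` over the circle and `L` the mean of `1 / k`. The flow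
reads `v_t = k ^ (p + 1) * (v'' + v)`, so `L' = -A / p`, and the Wirtinger deficit
`D = mean (v' ^ 2) - mean ((v - A) ^ 2)` satisfies
`D' = -2 * mean (k ^ (p + 1) * (v'' + v) * (v'' + v - A))`.

While `v` is uniformly close to `A`, the closing condition makes the first Fourier modes of `v`
small: normalising to `A = 1`, they agree with those of `v - 1 + p * (1 / k - 1)`, which is
quadratic in `k - 1`. The spectral gap on the remaining modes then gives `D' ≤ 0` and
`mean (v' ^ 2) ≤ 2 * D`. Hence the Dirichlet energy of `v` stays below four times its initial value
while `L` decreases, and the scale invariant oscillation `‖v'‖ * L ^ p` stays small by a continuity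
argument if it is small initially.

Consequently `A * L ^ p` and `k̂(0, t) * L` are both `1 + O(L ^ (2 * p))`. Integrating
`(L ^ (p + 1))' = -((p + 1) / p) * A * L ^ p` up to the blow-up time, at which `L` vanishes, yields
`L ^ (p + 1) = ((p + 1) / p) * (T - t) * (1 + O((T - t) ^ (2 / (p + 1))))`.
-/

/-! ### Elementary inequalities for powers -/

section Powers

variable {p : ℕ} {x : ℝ}

lemma one_sub_mul_inv_sub_one_le_pow (p : ℕ) (hx : 0 < x) : 1 - p * (x⁻¹ - 1) ≤ x ^ p := by
  have amgm : 2 - x⁻¹ ≤ x := by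
    have : 0 ≤ x⁻¹ * (x - 1) ^ 2 := by positivity
    have : x⁻¹ * (x - 1) ^ 2 = x - 2 + x⁻¹ := by field_simp; ring
    linarith
  calc 1 - p * (x⁻¹ - 1) = 1 + p * ((2 - x⁻¹) - 1) := by ring
    _ ≤ 1 + p * (x - 1) := by gcongr
    _ ≤ x ^ p := one_add_mul_sub_le_pow (by linarith) p

lemma pow_le_one_sub_mul_inv_sub_one_add (p : ℕ) (hx : 0 < x) (hx2 : x ≤ 2) :
    x ^ p ≤ 1 - p * (x⁻¹ - 1) + 4 ^ p * (x⁻¹ - 1) ^ 2 := by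
  induction p with
  | zero => simpa using sq_nonneg (x⁻¹ - 1)
  | succ p ih =>
    have hp : (1 + p : ℝ) ≤ 4 ^ p := by
      exact_mod_cast (by rw [add_comm]; exact Nat.lt_pow_self (by norm_num) : 1 + p ≤ 4 ^ p)
    calc x ^ (p + 1) = x ^ p * x := pow_succ x p
      _ ≤ (1 - p * (x⁻¹ - 1) + 4 ^ p * (x⁻¹ - 1) ^ 2) * x := by gcongr
      _ = 1 - (p + 1) * (x⁻¹ - 1) + (1 + p + 4 ^ p) * (x * (x⁻¹ - 1) ^ 2) := by field_simp; ring
      _ ≤ 1 - (p + 1) * (x⁻¹ - 1) + (4 ^ p + 4 ^ p) * (2 * (x⁻¹ - 1) ^ 2) := by gcongr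
      _ = 1 - (p + 1 : ℕ) * (x⁻¹ - 1) + 4 ^ (p + 1) * (x⁻¹ - 1) ^ 2 := by push_cast; ring

lemma abs_sub_one_le_abs_pow_sub_one (hp : p ≠ 0) (hx : 0 ≤ x) : |x - 1| ≤ |x ^ p - 1| := by
  rcases le_total 1 x with h | h
  · have : x ≤ x ^ p := le_self_pow₀ h hp
    rw [abs_of_nonneg (by linarith), abs_of_nonneg (by linarith)]
    linarith
  · have : x ^ p ≤ x := pow_le_of_le_one hx h hp
    rw [abs_of_nonpos (by linarith), abs_of_nonpos (by linarith)]
    linarith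

lemma abs_inv_sub_one_le_two_mul_abs_pow_sub_one (hp : p ≠ 0) (hx : 0 < x)
    (h : |x ^ p - 1| ≤ 1 / 2) : |x⁻¹ - 1| ≤ 2 * |x ^ p - 1| := by
  have hx1 := abs_sub_one_le_abs_pow_sub_one hp hx.le
  have hx2 : x⁻¹ ≤ 2 := by
    rw [inv_le_comm₀ hx two_pos]
    linarith [(abs_le.1 (hx1.trans h)).1]
  calc |x⁻¹ - 1| = |x⁻¹ * (1 - x)| := by rw [mul_sub, mul_one, inv_mul_cancel₀ hx.ne']
    _ = x⁻¹ * |x - 1| := by rw [abs_mul, abs_inv, abs_of_pos hx, abs_sub_comm]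
    _ ≤ 2 * |x ^ p - 1| := by gcongr

lemma abs_pow_succ_sub_one_le_mul_abs_pow_sub_one (hp : p ≠ 0) (hx : 0 < x)
    (h : |x ^ p - 1| ≤ 1 / 4) : |x ^ (p + 1) - 1| ≤ 9 / 4 * |x ^ p - 1| := by
  have hx1 := abs_sub_one_le_abs_pow_sub_one hp hx.le
  calc |x ^ (p + 1) - 1| = |x * (x ^ p - 1) + (x - 1)| := by ring_nf
    _ ≤ x * |x ^ p - 1| + |x ^ p - 1| := by
        grw [abs_add_le, abs_mul, abs_of_pos hx, hx1]
    _ = (x + 1) * |x ^ p - 1| := by ring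
    _ ≤ 9 / 4 * |x ^ p - 1| := by
        gcongr
        linarith [(abs_le.1 (hx1.trans h)).2]

/-- The pinching threshold: a curvature function whose `p`-th power stays within this relative
distance of its mean is close enough to a constant for the deficit estimates below. -/
noncomputable def pinchingConst (p : ℕ) : ℝ := 1 / (100 * 4 ^ p)

lemma pinchingConst_pos (p : ℕ) : 0 < pinchingConst p := by
  unfold pinchingConst
  positivity

lemma pinchingConst_le (p : ℕ) : pinchingConst p ≤ 1 / 100 := by
  have : (1 : ℝ) ≤ 4 ^ p := one_le_pow₀ (by norm_num)
  unfold pinchingConst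
  gcongr
  linarith

lemma sq_pow_sub_one_add_mul_inv_sub_one_le (hp : p ≠ 0) (hx : 0 < x)
    (h : |x ^ p - 1| ≤ pinchingConst p) :
    (x ^ p - 1 + p * (x⁻¹ - 1)) ^ 2 ≤ 1 / 10 * (x ^ p - 1) ^ 2 := by
  have h100 := h.trans (pinchingConst_le p)
  have hx1 := (abs_sub_one_le_abs_pow_sub_one hp hx.le).trans h100
  have lower := one_sub_mul_inv_sub_one_le_pow p hx
  have upper := pow_le_one_sub_mul_inv_sub_one_add p hx (by linarith [(abs_le.1 hx1).2])
  have quadratic : 4 ^ p * (x⁻¹ - 1) ^ 2 ≤ 1 / 25 * |x ^ p - 1| :=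
    calc 4 ^ p * (x⁻¹ - 1) ^ 2 = 4 ^ p * |x⁻¹ - 1| ^ 2 := by rw [sq_abs]
      _ ≤ 4 ^ p * (2 * |x ^ p - 1|) ^ 2 := by
          gcongr
          exact abs_inv_sub_one_le_two_mul_abs_pow_sub_one hp hx (by linarith)
      _ = 4 * 4 ^ p * |x ^ p - 1| * |x ^ p - 1| := by ring
      _ ≤ 4 * 4 ^ p * pinchingConst p * |x ^ p - 1| := by gcongr
      _ = 1 / 25 * |x ^ p - 1| := by rw [pinchingConst]; field_simp; ring
  calc (x ^ p - 1 + p * (x⁻¹ - 1)) ^ 2 ≤ (1 / 25 * |x ^ p - 1|) ^ 2 := by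
        gcongr
        · linarith
        · linarith
    _ ≤ 1 / 10 * (x ^ p - 1) ^ 2 := by
        rw [mul_pow, sq_abs]
        gcongr
        norm_num

lemma half_sq_sub_four_mul_sq_add_le (hp : p ≠ 0) (hx : 0 < x) (h : |x ^ p - 1| ≤ 1 / 100)
    (y : ℝ) : 1 / 2 * y ^ 2 - 4 * (x ^ p - 1) ^ 2 + y ≤ x ^ (p + 1) * (y + 1) * y := by
  have near_one := abs_pow_succ_sub_one_le_mul_abs_pow_sub_one hp hx (by linarith)
  have lower : 97 / 100 ≤ x ^ (p + 1) := by linarith [(abs_le.1 near_one).1]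
  have cross : -(9 / 4 * (|x ^ p - 1| * |y|)) ≤ (x ^ (p + 1) - 1) * y := by
    refine neg_le_of_abs_le ?_
    rw [abs_mul, ← mul_assoc]
    gcongr
  have young : 9 / 4 * (|x ^ p - 1| * |y|) ≤ 47 / 100 * y ^ 2 + 4 * (x ^ p - 1) ^ 2 := by
    rw [← sq_abs y, ← sq_abs (x ^ p - 1)]
    nlinarith [sq_nonneg (9 * |y| - 20 * |x ^ p - 1|)]
  calc 1 / 2 * y ^ 2 - 4 * (x ^ p - 1) ^ 2 + y
      ≤ 97 / 100 * y ^ 2 - 9 / 4 * (|x ^ p - 1| * |y|) + y := by linarith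
    _ ≤ x ^ (p + 1) * y ^ 2 + (x ^ (p + 1) - 1) * y + y := by
        have := mul_le_mul_of_nonneg_right lower (sq_nonneg y)
        linarith
    _ = x ^ (p + 1) * (y + 1) * y := by ring

end Powers

/-! ### Means over a period -/

/-- The mean of `f` over the period `[0, 2π]`. -/
noncomputable def circleMean (f : ℝ → ℝ) : ℝ := (2 * π)⁻¹ * ∫ θ in (0:ℝ)..(2 * π), f θ

section CircleMean

variable {f g : ℝ → ℝ}

lemma circleMean_const (c : ℝ) : (circleMean fun _ => c) = c := by
  rw [circleMean, intervalIntegral.integral_const, sub_zero, smul_eq_mul,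
    inv_mul_cancel_left₀ two_pi_pos.ne']

lemma circleMean_add (hf : Continuous f) (hg : Continuous g) :
    (circleMean fun θ => f θ + g θ) = circleMean f + circleMean g := by
  rw [circleMean, intervalIntegral.integral_add (hf.intervalIntegrable _ _)
    (hg.intervalIntegrable _ _), mul_add, ← circleMean, ← circleMean]

lemma circleMean_const_mul (c : ℝ) (f : ℝ → ℝ) :
    (circleMean fun θ => c * f θ) = c * circleMean f := by
  simp only [circleMean, intervalIntegral.integral_const_mul, mul_left_comm]

lemma circleMean_sub (hf : Continuous f) (hg : Continuous g) :
    (circleMean fun θ => f θ - g θ) = circleMean f - circleMean g := by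
  rw [circleMean, intervalIntegral.integral_sub (hf.intervalIntegrable _ _)
    (hg.intervalIntegrable _ _), mul_sub, ← circleMean, ← circleMean]

lemma circleMean_mono (hf : Continuous f) (hg : Continuous g) (h : ∀ θ, f θ ≤ g θ) :
    circleMean f ≤ circleMean g :=
  mul_le_mul_of_nonneg_left (intervalIntegral.integral_mono two_pi_pos.le
    (hf.intervalIntegrable _ _) (hg.intervalIntegrable _ _) h) (by positivity)

lemma circleMean_nonneg (h : ∀ θ, 0 ≤ f θ) : 0 ≤ circleMean f :=
  mul_nonneg (by positivity) (intervalIntegral.integral_nonneg two_pi_pos.le fun θ _ => h θ)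

lemma circleMean_pos (hf : Continuous f) (h : ∀ θ, 0 < f θ) : 0 < circleMean f :=
  mul_pos (by positivity) (intervalIntegral.intervalIntegral_pos_of_pos_on
    (hf.intervalIntegrable _ _) (fun θ _ => h θ) two_pi_pos)

lemma periodic_deriv {c : ℝ} (hf : Function.Periodic f c) : Function.Periodic (deriv f) c :=
  fun x => by rw [← deriv_comp_add_const, funext hf]

lemma circleMean_deriv (hf : ContDiff ℝ 1 f) (hper : Function.Periodic f (2 * π)) :
    circleMean (deriv f) = 0 := by
  have hper0 : f (2 * π) = f 0 := by simpa using hper 0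
  rw [circleMean, intervalIntegral.integral_deriv_eq_sub
    (fun θ _ => hf.differentiable one_ne_zero θ)
    ((hf.continuous_deriv le_rfl).intervalIntegrable _ _), hper0, sub_self, mul_zero]

lemma circleMean_deriv_mul_deriv (hf : ContDiff ℝ 1 f) (hfper : Function.Periodic f (2 * π))
    (hg : ContDiff ℝ 2 g) (hgper : Function.Periodic g (2 * π)) :
    (circleMean fun θ => deriv f θ * deriv g θ)
      = -circleMean fun θ => f θ * deriv (deriv g) θ := by
  have hg' : ContDiff ℝ 1 (deriv g) := hg.deriv' (n := 1)
  have product_rule : deriv (fun θ => f θ * deriv g θ)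
      = fun θ => deriv f θ * deriv g θ + f θ * deriv (deriv g) θ := funext fun θ =>
    deriv_fun_mul (hf.differentiable one_ne_zero θ) (hg'.differentiable one_ne_zero θ)
  have h := circleMean_deriv (hf.mul hg') (hfper.mul (periodic_deriv hgper))
  have hcont := hf.continuous
  have hcont' := hf.continuous_deriv le_rfl
  have hgcont' := hg'.continuous
  have hgcont'' := hg'.continuous_deriv le_rfl
  rw [product_rule, circleMean_add (by fun_prop) (by fun_prop)] at h
  linarith

lemma circleMean_sq_sub_circleMean (hf : Continuous f) :
    (circleMean fun θ => (f θ - circleMean f) ^ 2)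
      = (circleMean fun θ => f θ ^ 2) - circleMean f ^ 2 := by
  have expand : (fun θ => (f θ - circleMean f) ^ 2)
      = fun θ => f θ ^ 2 - 2 * circleMean f * f θ + circleMean f ^ 2 := by
    ext θ
    ring
  rw [expand, circleMean_add (by fun_prop) (by fun_prop), circleMean_sub (by fun_prop)
    (by fun_prop), circleMean_const_mul, circleMean_const]
  ring

lemma sq_circleMean_le_circleMean_sq (hf : Continuous f) :
    circleMean f ^ 2 ≤ circleMean fun θ => f θ ^ 2 := by
  have := circleMean_nonneg fun θ => sq_nonneg (f θ - circleMean f)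
  rw [circleMean_sq_sub_circleMean hf] at this
  linarith

lemma exists_eq_circleMean (hf : Continuous f) : ∃ c ∈ Ioo 0 (2 * π), f c = circleMean f := by
  obtain ⟨c, hc, h⟩ := exists_deriv_eq_slope (fun x => ∫ θ in (0:ℝ)..x, f θ) two_pi_pos
    (intervalIntegral.continuous_primitive (fun a b => hf.intervalIntegrable a b) 0).continuousOn
    fun x _ => (hf.integral_hasStrictDerivAt 0 x).hasDerivAt.differentiableAt.differentiableWithinAt
  refine ⟨c, hc, ?_⟩
  rw [hf.deriv_integral] at h
  simpa [circleMean, div_eq_inv_mul] using h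

/-- The mean of `(f')²`. -/
noncomputable def dirichletEnergy (f : ℝ → ℝ) : ℝ := circleMean fun θ => deriv f θ ^ 2

/-- The bound on the oscillation of a `C¹` function around its mean which the Cauchy-Schwarz
inequality gives in terms of its Dirichlet energy. -/
noncomputable def oscBound (f : ℝ → ℝ) : ℝ := 2 * π * √(dirichletEnergy f)

lemma oscBound_nonneg (f : ℝ → ℝ) : 0 ≤ oscBound f := by
  unfold oscBound
  positivity

lemma integral_abs_deriv_le_oscBound (hf : ContDiff ℝ 1 f) :
    ∫ θ in (0:ℝ)..(2 * π), |deriv f θ| ≤ oscBound f := by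
  have hf' := (hf.continuous_deriv le_rfl).abs
  calc ∫ θ in (0:ℝ)..(2 * π), |deriv f θ| = 2 * π * circleMean fun θ => |deriv f θ| := by
        rw [circleMean, mul_inv_cancel_left₀ two_pi_pos.ne']
    _ ≤ oscBound f := by
        refine mul_le_mul_of_nonneg_left (Real.le_sqrt_of_sq_le ?_) two_pi_pos.le
        simpa only [dirichletEnergy, sq_abs] using sq_circleMean_le_circleMean_sq hf'

lemma abs_sub_le_integral_abs_deriv (hf : ContDiff ℝ 1 f) {a b c x : ℝ} (hc : c ∈ Icc a b)
    (hx : x ∈ Icc a b) : |f x - f c| ≤ ∫ θ in a..b, |deriv f θ| := by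
  have hf' := hf.continuous_deriv le_rfl
  calc |f x - f c| = |∫ θ in c..x, deriv f θ| := by
        rw [intervalIntegral.integral_deriv_eq_sub (fun θ _ => hf.differentiable one_ne_zero θ)
          (hf'.intervalIntegrable _ _)]
    _ ≤ ∫ θ in uIoc c x, |deriv f θ| := by
        simpa only [norm_eq_abs] using
          intervalIntegral.norm_integral_le_integral_norm_uIoc (f := deriv f) (a := c) (b := x)
            (μ := volume)
    _ ≤ ∫ θ in Ioc a b, |deriv f θ| := by
        refine setIntegral_mono_set (hf'.abs.intervalIntegrable a b).1
          (Eventually.of_forall fun θ => abs_nonneg _) (LE.le.eventuallyLE ?_)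
        exact Ioc_subset_Ioc (le_inf hc.1 hx.1) (sup_le hc.2 hx.2)
    _ = ∫ θ in a..b, |deriv f θ| := (intervalIntegral.integral_of_le (hc.1.trans hc.2)).symm

lemma abs_sub_circleMean_le_oscBound (hf : ContDiff ℝ 1 f) (hper : Function.Periodic f (2 * π))
    (x : ℝ) : |f x - circleMean f| ≤ oscBound f := by
  obtain ⟨c, hc, hfc⟩ := exists_eq_circleMean hf.continuous
  obtain ⟨y, hy, hfy⟩ := hper.exists_mem_Ico₀ two_pi_pos x
  rw [hfy, ← hfc]
  exact (abs_sub_le_integral_abs_deriv hf (Ioo_subset_Icc_self hc) (Ico_subset_Icc_self hy)).trans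
    (integral_abs_deriv_le_oscBound hf)

end CircleMean

/-! ### Fourier coefficients and the spectral gap -/

section Fourier

variable {f g : ℝ → ℝ}

lemma fCoeff_eq_fourierCoeffOn (f : ℝ → ℝ) (n : ℤ) :
    fCoeff f n = fourierCoeffOn two_pi_pos (fun x => (f x : ℂ)) n := by
  rw [fourierCoeffOn_eq_integral, fCoeff, Complex.real_smul]
  congr 1
  · push_cast
    simp
  · refine intervalIntegral.integral_congr fun x _ => ?_
    simp only [fourier_coe_apply, smul_eq_mul]
    rw [mul_comm]
    congr 2
    have : (π : ℂ) ≠ 0 := mod_cast pi_ne_zero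
    push_cast
    field_simp
    ring

lemma fCoeff_zero (f : ℝ → ℝ) : fCoeff f 0 = circleMean f := by
  simp [fCoeff, circleMean, intervalIntegral.integral_ofReal]

lemma fCoeff_const (c : ℝ) {n : ℤ} (hn : n ≠ 0) : fCoeff (fun _ => c) n = 0 := by
  rw [fCoeff_eq_fourierCoeffOn, fourierCoeffOn_of_hasDerivAt two_pi_pos hn (f' := fun _ => 0)
    (fun x _ => hasDerivAt_const x _) (by simp), fourierCoeffOn_eq_integral]
  simp

lemma fCoeff_const_mul (c : ℝ) (f : ℝ → ℝ) (n : ℤ) :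
    fCoeff (fun x => c * f x) n = c * fCoeff f n := by
  simpa only [fCoeff_eq_fourierCoeffOn, Complex.ofReal_mul] using
    fourierCoeffOn.const_mul (fun x => (f x : ℂ)) (c : ℂ) n two_pi_pos

lemma fCoeff_add (hf : Continuous f) (hg : Continuous g) (n : ℤ) :
    fCoeff (fun x => f x + g x) n = fCoeff f n + fCoeff g n := by
  have integrable {h : ℝ → ℝ} (hh : Continuous h) : IntervalIntegrable
      (fun θ : ℝ => (h θ : ℂ) * Complex.exp (-(Complex.I * n * θ))) volume 0 (2 * π) :=
    Continuous.intervalIntegrable (by fun_prop) _ _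
  simp only [fCoeff, Complex.ofReal_add, add_mul]
  rw [intervalIntegral.integral_add (integrable hf) (integrable hg), mul_add]

lemma fCoeff_sub_const (hf : Continuous f) (c : ℝ) {n : ℤ} (hn : n ≠ 0) :
    fCoeff (fun x => f x - c) n = fCoeff f n := by
  simp only [sub_eq_add_neg]
  rw [fCoeff_add hf continuous_const, fCoeff_const _ hn, add_zero]

lemma fCoeff_neg (f : ℝ → ℝ) (n : ℤ) : fCoeff f (-n) = (starRingEnd ℂ) (fCoeff f n) := by
  simp only [fCoeff, map_mul, ← intervalIntegral.intervalIntegral_conj]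
  congr 1
  · simp [Complex.conj_ofNat]
  · refine intervalIntegral.integral_congr fun x _ => ?_
    simp [← Complex.exp_conj]

lemma fCoeff_deriv (hf : ContDiff ℝ 1 f) (hper : Function.Periodic f (2 * π)) (n : ℤ) :
    fCoeff (deriv f) n = Complex.I * n * fCoeff f n := by
  rcases eq_or_ne n 0 with rfl | hn
  · rw [fCoeff_zero, circleMean_deriv hf hper]
    simp
  have hper0 : f (2 * π) = f 0 := by simpa using hper 0
  have h := fourierCoeffOn_of_hasDerivAt two_pi_pos (f := fun x => (f x : ℂ))
    (f' := fun x => ((deriv f x : ℝ) : ℂ)) hn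
    (fun x _ => (hf.differentiable one_ne_zero x).hasDerivAt.ofReal_comp)
    ((Complex.continuous_ofReal.comp (hf.continuous_deriv le_rfl)).intervalIntegrable _ _)
  have : (π : ℂ) ≠ 0 := mod_cast pi_ne_zero
  have : (n : ℂ) ≠ 0 := mod_cast hn
  rw [fCoeff_eq_fourierCoeffOn, fCoeff_eq_fourierCoeffOn, h, hper0]
  push_cast
  field_simp
  ring_nf

lemma hasSum_sq_norm_fCoeff (hf : Continuous f) :
    HasSum (fun n => ‖fCoeff f n‖ ^ 2) (circleMean fun θ => f θ ^ 2) := by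
  have hfc : Continuous fun x => (f x : ℂ) := by fun_prop
  obtain ⟨C, hC⟩ := (isCompact_Icc (a := (0:ℝ)) (b := 2 * π)).exists_bound_of_continuousOn
    hfc.continuousOn
  have hL2 : MemLp (fun x => (f x : ℂ)) 2 (volume.restrict (Ioc 0 (2 * π))) := by
    refine MemLp.of_bound hfc.aestronglyMeasurable C ?_
    filter_upwards [ae_restrict_mem measurableSet_Ioc] with x hx
    exact hC x (Ioc_subset_Icc_self hx)
  have parseval := hasSum_sq_fourierCoeffOn two_pi_pos hL2
  simp only [← fCoeff_eq_fourierCoeffOn] at parseval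
  simpa [circleMean] using parseval

/-- The operator `f ↦ f'' + f`, whose kernel on the circle is spanned by the first modes. -/
noncomputable def helmholtz (f : ℝ → ℝ) (θ : ℝ) : ℝ := deriv (deriv f) θ + f θ

lemma continuous_helmholtz (hf : ContDiff ℝ 2 f) : Continuous (helmholtz f) :=
  ((hf.deriv' (n := 1)).continuous_deriv le_rfl).add hf.continuous

lemma helmholtz_sub_const (f : ℝ → ℝ) (c : ℝ) :
    helmholtz (fun θ => f θ - c) = fun θ => helmholtz f θ - c := by
  ext θ
  simp only [helmholtz, deriv_sub_const_fun]
  ring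

lemma circleMean_helmholtz (hf : ContDiff ℝ 2 f) (hper : Function.Periodic f (2 * π)) :
    circleMean (helmholtz f) = circleMean f := by
  have hf' : ContDiff ℝ 1 (deriv f) := hf.deriv' (n := 1)
  rw [funext fun θ => helmholtz.eq_1 f θ, circleMean_add (hf'.continuous_deriv le_rfl)
    hf.continuous, circleMean_deriv hf' (periodic_deriv hper), zero_add]

lemma fCoeff_helmholtz (hf : ContDiff ℝ 2 f) (hper : Function.Periodic f (2 * π)) (n : ℤ) :
    fCoeff (helmholtz f) n = ((1 - n ^ 2 : ℝ) : ℂ) * fCoeff f n := by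
  have hf' : ContDiff ℝ 1 (deriv f) := hf.deriv' (n := 1)
  rw [funext fun θ => helmholtz.eq_1 f θ, fCoeff_add (hf'.continuous_deriv le_rfl) hf.continuous,
    fCoeff_deriv hf' (periodic_deriv hper), fCoeff_deriv (hf.of_le one_le_two) hper]
  push_cast
  linear_combination (n : ℂ) ^ 2 * fCoeff f n * Complex.I_sq

lemma hasSum_sq_mul_sq_norm_fCoeff (hf : ContDiff ℝ 1 f) (hper : Function.Periodic f (2 * π)) :
    HasSum (fun n : ℤ => (n : ℝ) ^ 2 * ‖fCoeff f n‖ ^ 2) (dirichletEnergy f) := by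
  simpa [dirichletEnergy, fCoeff_deriv hf hper, mul_pow] using
    hasSum_sq_norm_fCoeff (hf.continuous_deriv le_rfl)

lemma hasSum_sq_one_sub_sq_mul_sq_norm_fCoeff (hf : ContDiff ℝ 2 f)
    (hper : Function.Periodic f (2 * π)) :
    HasSum (fun n : ℤ => (1 - (n : ℝ) ^ 2) ^ 2 * ‖fCoeff f n‖ ^ 2)
      (circleMean fun θ => helmholtz f θ ^ 2) := by
  simpa only [fCoeff_helmholtz hf hper, norm_mul, Complex.norm_real, mul_pow, norm_eq_abs,
    sq_abs] using hasSum_sq_norm_fCoeff (continuous_helmholtz hf)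

/-- The share of the frequencies `±1` in the Parseval sum of `f`. -/
noncomputable def firstModeEnergy (f : ℝ → ℝ) : ℝ := ‖fCoeff f 1‖ ^ 2 + ‖fCoeff f (-1)‖ ^ 2

lemma firstModeEnergy_eq_sum (f : ℝ → ℝ) :
    firstModeEnergy f = ∑ n ∈ {1, -1}, ‖fCoeff f n‖ ^ 2 := by
  rw [Finset.sum_pair (by norm_num), firstModeEnergy]

lemma hasSum_firstModeEnergy (f : ℝ → ℝ) :
    HasSum (fun n : ℤ => if n ^ 2 = 1 then ‖fCoeff f n‖ ^ 2 else 0) (firstModeEnergy f) := by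
  have energy_eq : firstModeEnergy f
      = ∑ n ∈ {1, -1}, if n ^ 2 = 1 then ‖fCoeff f n‖ ^ 2 else 0 := by
    simp [firstModeEnergy_eq_sum]
  rw [energy_eq]
  exact hasSum_sum_of_ne_finset_zero fun n hn => by simp_all

lemma firstModeEnergy_le_circleMean_sq (hf : Continuous f) :
    firstModeEnergy f ≤ circleMean fun θ => f θ ^ 2 := by
  rw [firstModeEnergy_eq_sum]
  exact sum_le_hasSum _ (fun n _ => by positivity) (hasSum_sq_norm_fCoeff hf)

lemma eq_zero_or_sq_eq_one_or_four_le_sq (n : ℤ) : n = 0 ∨ n ^ 2 = 1 ∨ 4 ≤ n ^ 2 := by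
  by_contra! h
  obtain ⟨h0, h1, h4⟩ := h
  have : n < 2 := by nlinarith
  have : -2 < n := by nlinarith
  interval_cases n <;> simp_all

lemma circleMean_sq_le_dirichletEnergy (hf : ContDiff ℝ 1 f)
    (hper : Function.Periodic f (2 * π)) (hmean : circleMean f = 0) :
    (circleMean fun θ => f θ ^ 2) ≤ dirichletEnergy f := by
  refine hasSum_le (fun n => ?_) (hasSum_sq_norm_fCoeff hf.continuous)
    (hasSum_sq_mul_sq_norm_fCoeff hf hper)
  rcases eq_or_ne n 0 with rfl | hn
  · simp [fCoeff_zero, hmean]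
  · have : (1 : ℝ) ≤ (n : ℝ) ^ 2 := mod_cast (by positivity : 0 < n ^ 2)
    exact le_mul_of_one_le_left (by positivity) this

lemma nine_mul_sub_firstModeEnergy_le (hf : ContDiff ℝ 2 f)
    (hper : Function.Periodic f (2 * π)) (hmean : circleMean f = 0) :
    9 * ((circleMean fun θ => f θ ^ 2) - firstModeEnergy f)
      ≤ circleMean fun θ => helmholtz f θ ^ 2 := by
  refine hasSum_le (fun n => ?_)
    (((hasSum_sq_norm_fCoeff hf.continuous).sub (hasSum_firstModeEnergy f)).mul_left 9)
    (hasSum_sq_one_sub_sq_mul_sq_norm_fCoeff hf hper)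
  rcases eq_zero_or_sq_eq_one_or_four_le_sq n with rfl | hn | hn
  · simp [fCoeff_zero, hmean]
  · simp only [hn, if_true, sub_self, mul_zero]
    positivity
  · have hn' : (4 : ℝ) ≤ (n : ℝ) ^ 2 := mod_cast hn
    rw [if_neg (by omega), sub_zero]
    gcongr
    nlinarith

lemma three_fourths_mul_sub_firstModeEnergy_le (hf : ContDiff ℝ 1 f)
    (hper : Function.Periodic f (2 * π)) (hmean : circleMean f = 0) :
    3 / 4 * (dirichletEnergy f - firstModeEnergy f) ≤
      dirichletEnergy f - circleMean fun θ => f θ ^ 2 := by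
  have parseval := hasSum_sq_norm_fCoeff hf.continuous
  have parseval' := hasSum_sq_mul_sq_norm_fCoeff hf hper
  refine hasSum_le (fun n => ?_) ((parseval'.sub (hasSum_firstModeEnergy f)).mul_left (3 / 4))
    (parseval'.sub parseval)
  rcases eq_zero_or_sq_eq_one_or_four_le_sq n with rfl | hn | hn
  · simp [fCoeff_zero, hmean]
  · have hn' : (n : ℝ) ^ 2 = 1 := mod_cast hn
    simp [hn, hn']
  · have hn' : (4 : ℝ) ≤ (n : ℝ) ^ 2 := mod_cast hn
    rw [if_neg (by omega), sub_zero, ← sub_one_mul, ← mul_assoc]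
    gcongr
    linarith

end Fourier

/-! ### The Wirtinger deficit of a power of a curvature function -/

/-- Curvature functions, in terms of the tangent angle, of closed convex curves. -/
structure IsCurvatureFunction (f : ℝ → ℝ) : Prop where
  contDiff : ContDiff ℝ 2 f
  periodic : Function.Periodic f (2 * π)
  pos : ∀ θ, 0 < f θ
  closing : ∫ θ in (0:ℝ)..(2 * π), Complex.exp (Complex.I * θ) / f θ = 0

/-- The mean of `f ^ p`. -/
noncomputable def powMean (p : ℕ) (f : ℝ → ℝ) : ℝ := circleMean fun θ => f θ ^ p

/-- `f ^ p` stays within the relative distance `ε` of its mean. -/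
def IsPinched (ε : ℝ) (p : ℕ) (f : ℝ → ℝ) : Prop :=
  ∀ θ, |f θ ^ p - powMean p f| ≤ ε * powMean p f

/-- The amount by which `f` fails to be an equality case of Wirtinger's inequality. -/
noncomputable def wirtingerDeficit (f : ℝ → ℝ) : ℝ :=
  dirichletEnergy f - circleMean fun θ => (f θ - circleMean f) ^ 2

/-- Half the rate at which the Wirtinger deficit of the `p`-th power of the curvature decreases
along the `p`-curve shortening flow. -/
noncomputable def deficitDissipation (p : ℕ) (f : ℝ → ℝ) : ℝ :=
  circleMean fun θ => f θ ^ (p + 1) * helmholtz (fun x => f x ^ p) θ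
    * (helmholtz (fun x => f x ^ p) θ - powMean p f)

section Scaling

variable {f : ℝ → ℝ} {c : ℝ}

lemma powMean_const_mul (p : ℕ) (c : ℝ) (f : ℝ → ℝ) :
    powMean p (fun θ => c * f θ) = c ^ p * powMean p f := by
  simp only [powMean, mul_pow, circleMean_const_mul]

lemma isPinched_const_mul_iff (ε : ℝ) (p : ℕ) (hc : 0 < c) (f : ℝ → ℝ) :
    IsPinched ε p (fun θ => c * f θ) ↔ IsPinched ε p f := by
  have hcp : 0 < c ^ p := pow_pos hc p
  simp only [IsPinched, powMean_const_mul, mul_pow, ← mul_sub, abs_mul, abs_of_pos hcp,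
    mul_left_comm ε, mul_le_mul_iff_right₀ hcp]

lemma helmholtz_const_mul (c : ℝ) (f : ℝ → ℝ) :
    helmholtz (fun θ => c * f θ) = fun θ => c * helmholtz f θ := by
  ext θ
  simp only [helmholtz, deriv_const_mul_field', mul_add]

lemma dirichletEnergy_const_mul (c : ℝ) (f : ℝ → ℝ) :
    dirichletEnergy (fun θ => c * f θ) = c ^ 2 * dirichletEnergy f := by
  simp only [dirichletEnergy, deriv_const_mul_field', mul_pow, circleMean_const_mul]

lemma wirtingerDeficit_const_mul (c : ℝ) (f : ℝ → ℝ) :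
    wirtingerDeficit (fun θ => c * f θ) = c ^ 2 * wirtingerDeficit f := by
  simp only [wirtingerDeficit, dirichletEnergy_const_mul, circleMean_const_mul, ← mul_sub, mul_pow]

lemma deficitDissipation_const_mul (p : ℕ) (c : ℝ) (f : ℝ → ℝ) :
    deficitDissipation p (fun θ => c * f θ) = c ^ (3 * p + 1) * deficitDissipation p f := by
  simp only [deficitDissipation, powMean_const_mul, mul_pow, helmholtz_const_mul,
    ← circleMean_const_mul]
  congr with θ
  ring

lemma IsCurvatureFunction.const_mul (hf : IsCurvatureFunction f) (hc : 0 < c) :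
    IsCurvatureFunction fun θ => c * f θ where
  contDiff := contDiff_const.mul hf.contDiff
  periodic := hf.periodic.comp fun y => c * y
  pos θ := mul_pos hc (hf.pos θ)
  closing := by
    have factor (θ : ℝ) : Complex.exp (Complex.I * θ) / ((c * f θ : ℝ) : ℂ)
        = (c : ℂ)⁻¹ * (Complex.exp (Complex.I * θ) / f θ) := by
      push_cast
      rw [← div_div, div_right_comm, div_eq_inv_mul]
    simp only [factor, intervalIntegral.integral_const_mul, hf.closing, mul_zero]

lemma powMean_pos (hf : IsCurvatureFunction f) (p : ℕ) : 0 < powMean p f :=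
  circleMean_pos (hf.contDiff.continuous.pow p) fun θ => pow_pos (hf.pos θ) p

lemma IsCurvatureFunction.exists_eq_const_mul_powMean_eq_one (hf : IsCurvatureFunction f) {p : ℕ}
    (hp : p ≠ 0) : ∃ (c : ℝ) (u : ℝ → ℝ), 0 < c ∧ IsCurvatureFunction u ∧ powMean p u = 1 ∧
      f = fun θ => c * u θ := by
  have hA : 0 < powMean p f := powMean_pos hf p
  have hc : 0 < powMean p f ^ (p : ℝ)⁻¹ := rpow_pos_of_pos hA _
  refine ⟨powMean p f ^ (p : ℝ)⁻¹, fun θ => (powMean p f ^ (p : ℝ)⁻¹)⁻¹ * f θ, hc,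
    hf.const_mul (inv_pos.2 hc), ?_, ?_⟩
  · rw [powMean_const_mul, inv_pow, rpow_inv_natCast_pow hA.le hp, inv_mul_cancel₀ hA.ne']
  · simp only [mul_inv_cancel_left₀ hc.ne']

end Scaling

section Normalized

variable {p : ℕ} {u : ℝ → ℝ}

lemma IsPinched.abs_pow_sub_one_le {ε : ℝ} (h : IsPinched ε p u) (hA : powMean p u = 1) (θ : ℝ) :
    |u θ ^ p - 1| ≤ ε := by
  simpa only [hA, mul_one] using h θ

lemma IsCurvatureFunction.fCoeff_inv_eq_zero (hu : IsCurvatureFunction u) :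
    fCoeff (fun θ => (u θ)⁻¹) 1 = 0 ∧ fCoeff (fun θ => (u θ)⁻¹) (-1) = 0 := by
  have neg_one : fCoeff (fun θ => (u θ)⁻¹) (-1) = 0 := by
    have : fCoeff (fun θ => (u θ)⁻¹) (-1) = 1 / (2 * π)
        * ∫ θ in (0:ℝ)..(2 * π), Complex.exp (Complex.I * θ) / u θ := by
      simp [fCoeff, div_eq_inv_mul]
    rw [this, hu.closing, mul_zero]
  exact ⟨by simpa [neg_one] using fCoeff_neg (fun θ => (u θ)⁻¹) (-1), neg_one⟩

-- `u ^ p - 1 + p * (u⁻¹ - 1)` has the same first modes as `u ^ p - 1`, but no linear part in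
-- `u - 1`.
lemma firstModeEnergy_pow_sub_one_le (hp : p ≠ 0) (hu : IsCurvatureFunction u)
    (hA : powMean p u = 1) (hpinch : IsPinched (pinchingConst p) p u) :
    firstModeEnergy (fun θ => u θ ^ p - 1) ≤ 1 / 10 * circleMean fun θ => (u θ ^ p - 1) ^ 2 := by
  have hcont : Continuous u := hu.contDiff.continuous
  have hinv : Continuous fun θ => (u θ)⁻¹ := hcont.inv₀ fun θ => (hu.pos θ).ne'
  have same_mode {n : ℤ} (hn : n ≠ 0) (h : fCoeff (fun θ => (u θ)⁻¹) n = 0) :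
      fCoeff (fun θ => u θ ^ p - 1) n = fCoeff (fun θ => u θ ^ p - 1 + p * ((u θ)⁻¹ - 1)) n := by
    rw [fCoeff_add (f := fun θ => u θ ^ p - 1) (by fun_prop) (by fun_prop), fCoeff_const_mul,
      fCoeff_sub_const hinv 1 hn, h, mul_zero, add_zero]
  calc firstModeEnergy (fun θ => u θ ^ p - 1)
      = firstModeEnergy (fun θ => u θ ^ p - 1 + p * ((u θ)⁻¹ - 1)) := by
        simp only [firstModeEnergy, same_mode one_ne_zero hu.fCoeff_inv_eq_zero.1,
          same_mode (by norm_num) hu.fCoeff_inv_eq_zero.2]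
    _ ≤ circleMean fun θ => (u θ ^ p - 1 + p * ((u θ)⁻¹ - 1)) ^ 2 :=
        firstModeEnergy_le_circleMean_sq (by fun_prop)
    _ ≤ circleMean fun θ => 1 / 10 * (u θ ^ p - 1) ^ 2 :=
        circleMean_mono (by fun_prop) (by fun_prop) fun θ =>
          sq_pow_sub_one_add_mul_inv_sub_one_le hp (hu.pos θ) (hpinch.abs_pow_sub_one_le hA θ)
    _ = 1 / 10 * circleMean fun θ => (u θ ^ p - 1) ^ 2 := circleMean_const_mul _ _

lemma circleMean_pow_sub_one (hu : Continuous u) (hA : powMean p u = 1) :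
    (circleMean fun θ => u θ ^ p - 1) = 0 := by
  rw [circleMean_sub (by fun_prop) continuous_const, circleMean_const, ← powMean, hA, sub_self]

lemma dirichletEnergy_pow_le_of_powMean_eq_one (hp : p ≠ 0) (hu : IsCurvatureFunction u)
    (hA : powMean p u = 1) (hpinch : IsPinched (pinchingConst p) p u) :
    dirichletEnergy (fun θ => u θ ^ p) ≤ 2 * wirtingerDeficit (fun θ => u θ ^ p) := by
  have hw : ContDiff ℝ 2 fun θ => u θ ^ p - 1 := (hu.contDiff.pow p).sub contDiff_const
  have hper : Function.Periodic (fun θ => u θ ^ p - 1) (2 * π) :=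
    hu.periodic.comp fun y => y ^ p - 1
  have hmean := circleMean_pow_sub_one hu.contDiff.continuous hA
  have first_mode := firstModeEnergy_pow_sub_one_le hp hu hA hpinch
  have wirtinger := circleMean_sq_le_dirichletEnergy (hw.of_le one_le_two) hper hmean
  have gap := three_fourths_mul_sub_firstModeEnergy_le (hw.of_le one_le_two) hper hmean
  have energy_sub_one : dirichletEnergy (fun θ => u θ ^ p - 1)
      = dirichletEnergy fun θ => u θ ^ p := by
    simp only [dirichletEnergy, deriv_sub_const_fun]
  rw [energy_sub_one] at wirtinger gap
  rw [wirtingerDeficit, show (circleMean fun θ => u θ ^ p) = 1 from hA]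
  linarith

lemma deficitDissipation_nonneg_of_powMean_eq_one (hp : p ≠ 0) (hu : IsCurvatureFunction u)
    (hA : powMean p u = 1) (hpinch : IsPinched (pinchingConst p) p u) :
    0 ≤ deficitDissipation p u := by
  have hcont : Continuous u := hu.contDiff.continuous
  have hw : ContDiff ℝ 2 fun θ => u θ ^ p - 1 := (hu.contDiff.pow p).sub contDiff_const
  have hper : Function.Periodic (fun θ => u θ ^ p - 1) (2 * π) :=
    hu.periodic.comp fun y => y ^ p - 1
  have hmean := circleMean_pow_sub_one hcont hA
  set h := helmholtz fun θ => u θ ^ p - 1 with hh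
  have hhcont : Continuous h := continuous_helmholtz hw
  have first_mode := firstModeEnergy_pow_sub_one_le hp hu hA hpinch
  have gap := nine_mul_sub_firstModeEnergy_le hw hper hmean
  have variance_nonneg := circleMean_nonneg fun θ => sq_nonneg (u θ ^ p - 1)
  calc 0 ≤ 1 / 2 * (circleMean fun θ => h θ ^ 2)
        - 4 * (circleMean fun θ => (u θ ^ p - 1) ^ 2) := by linarith
    _ = circleMean fun θ => 1 / 2 * h θ ^ 2 - 4 * (u θ ^ p - 1) ^ 2 + h θ := by
        rw [circleMean_add (by fun_prop) hhcont, circleMean_sub (by fun_prop) (by fun_prop),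
          circleMean_const_mul, circleMean_const_mul, hh, circleMean_helmholtz hw hper, hmean,
          add_zero]
    _ ≤ circleMean fun θ => u θ ^ (p + 1) * (h θ + 1) * h θ :=
        circleMean_mono (by fun_prop) (by fun_prop) fun θ => half_sq_sub_four_mul_sq_add_le hp
          (hu.pos θ) ((hpinch.abs_pow_sub_one_le hA θ).trans (pinchingConst_le p)) _
    _ = deficitDissipation p u := by
        simp only [deficitDissipation, hA, hh, helmholtz_sub_const, sub_add_cancel]

end Normalized

namespace IsCurvatureFunction

variable {p : ℕ} {f : ℝ → ℝ}

lemma dirichletEnergy_pow_le (hf : IsCurvatureFunction f) (hp : p ≠ 0)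
    (hpinch : IsPinched (pinchingConst p) p f) :
    dirichletEnergy (fun θ => f θ ^ p) ≤ 2 * wirtingerDeficit (fun θ => f θ ^ p) := by
  obtain ⟨c, u, hc, hu, hA, rfl⟩ := hf.exists_eq_const_mul_powMean_eq_one hp
  rw [isPinched_const_mul_iff _ p hc] at hpinch
  simp only [mul_pow, dirichletEnergy_const_mul, wirtingerDeficit_const_mul]
  rw [mul_left_comm]
  gcongr
  exact dirichletEnergy_pow_le_of_powMean_eq_one hp hu hA hpinch

lemma deficitDissipation_nonneg (hf : IsCurvatureFunction f) (hp : p ≠ 0)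
    (hpinch : IsPinched (pinchingConst p) p f) : 0 ≤ deficitDissipation p f := by
  obtain ⟨c, u, hc, hu, hA, rfl⟩ := hf.exists_eq_const_mul_powMean_eq_one hp
  rw [isPinched_const_mul_iff _ p hc] at hpinch
  rw [deficitDissipation_const_mul]
  exact mul_nonneg (by positivity) (deficitDissipation_nonneg_of_powMean_eq_one hp hu hA hpinch)

end IsCurvatureFunction

/-! ### Comparison of the means of a pinched curvature function -/

/-- The mean of `1 / f`: up to the factor `2π`, the length of a curve with curvature function
`f`. -/
noncomputable def invMean (f : ℝ → ℝ) : ℝ := circleMean fun θ => (f θ)⁻¹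

/-- A scale invariant measure of the oscillation of `f ^ p`. -/
noncomputable def oscRatio (p : ℕ) (f : ℝ → ℝ) : ℝ :=
  oscBound (fun θ => f θ ^ p) * invMean f ^ p

section InvMean

variable {f : ℝ → ℝ}

lemma invMean_const_mul (c : ℝ) (f : ℝ → ℝ) :
    invMean (fun θ => c * f θ) = c⁻¹ * invMean f := by
  simp only [invMean, mul_inv, circleMean_const_mul]

lemma invMean_pos (hf : Continuous f) (hpos : ∀ θ, 0 < f θ) : 0 < invMean f :=
  circleMean_pos (hf.inv₀ fun θ => (hpos θ).ne') fun θ => inv_pos.2 (hpos θ)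

lemma circleMean_one_sub_mul_inv_sub_one (hf : Continuous f) (hpos : ∀ θ, 0 < f θ)
    (hL : invMean f = 1) (c : ℝ) : (circleMean fun θ => 1 - c * ((f θ)⁻¹ - 1)) = 1 := by
  have hinv : Continuous fun θ => (f θ)⁻¹ := hf.inv₀ fun θ => (hpos θ).ne'
  rw [circleMean_sub (by fun_prop) (by fun_prop), circleMean_const_mul,
    circleMean_sub hinv continuous_const, circleMean_const, ← invMean, hL]
  ring

lemma one_le_powMean_of_invMean_eq_one (hf : Continuous f) (hpos : ∀ θ, 0 < f θ)
    (hL : invMean f = 1) (p : ℕ) : 1 ≤ powMean p f := by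
  have hinv : Continuous fun θ => (f θ)⁻¹ := hf.inv₀ fun θ => (hpos θ).ne'
  rw [← circleMean_one_sub_mul_inv_sub_one hf hpos hL p]
  exact circleMean_mono (by fun_prop) (by fun_prop) fun θ =>
    one_sub_mul_inv_sub_one_le_pow p (hpos θ)

lemma le_two_of_abs_inv_sub_one_le {x : ℝ} (hx : 0 < x) (h : |x⁻¹ - 1| ≤ 1 / 2) : x ≤ 2 := by
  rw [← inv_le_inv₀ two_pos hx]
  linarith [(abs_le.1 h).1]

lemma powMean_le_of_invMean_eq_one (hf : Continuous f) (hpos : ∀ θ, 0 < f θ)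
    (hL : invMean f = 1) {s : ℝ} (hs : s ≤ 1 / 2) (h : ∀ θ, |(f θ)⁻¹ - 1| ≤ s) (p : ℕ) :
    powMean p f ≤ 1 + 4 ^ p * s ^ 2 := by
  have hinv : Continuous fun θ => (f θ)⁻¹ := hf.inv₀ fun θ => (hpos θ).ne'
  calc powMean p f ≤ circleMean fun θ => 1 - p * ((f θ)⁻¹ - 1) + 4 ^ p * s ^ 2 := by
        refine circleMean_mono (by fun_prop) (by fun_prop) fun θ => ?_
        refine (pow_le_one_sub_mul_inv_sub_one_add p (hpos θ)
          (le_two_of_abs_inv_sub_one_le (hpos θ) ((h θ).trans hs))).trans ?_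
        gcongr 1 - p * ((f θ)⁻¹ - 1) + 4 ^ p * ?_
        exact sq_le_sq.2 ((h θ).trans (le_abs_self s))
    _ = 1 + 4 ^ p * s ^ 2 := by
        rw [circleMean_add (by fun_prop) continuous_const, circleMean_const,
          circleMean_one_sub_mul_inv_sub_one hf hpos hL]

lemma invMean_invMean_mul (hf : Continuous f) (hpos : ∀ θ, 0 < f θ) :
    invMean (fun θ => invMean f * f θ) = 1 := by
  rw [invMean_const_mul, inv_mul_cancel₀ (invMean_pos hf hpos).ne']

lemma one_le_powMean_mul_invMean_pow (hf : Continuous f) (hpos : ∀ θ, 0 < f θ) (p : ℕ) :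
    1 ≤ powMean p f * invMean f ^ p := by
  rw [mul_comm, ← powMean_const_mul]
  exact one_le_powMean_of_invMean_eq_one (by fun_prop)
    (fun θ => mul_pos (invMean_pos hf hpos) (hpos θ)) (invMean_invMean_mul hf hpos) p

end InvMean

namespace IsCurvatureFunction

variable {p : ℕ} {f : ℝ → ℝ}

lemma invMean_pos (hf : IsCurvatureFunction f) : 0 < invMean f :=
  _root_.invMean_pos hf.contDiff.continuous hf.pos

lemma oscRatio_nonneg (hf : IsCurvatureFunction f) (p : ℕ) : 0 ≤ oscRatio p f :=
  mul_nonneg (oscBound_nonneg _) (pow_nonneg hf.invMean_pos.le p)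

lemma isPinched_oscRatio (hf : IsCurvatureFunction f) (p : ℕ) :
    IsPinched (oscRatio p f) p f := fun θ =>
  calc |f θ ^ p - powMean p f| ≤ oscBound fun x => f x ^ p :=
        abs_sub_circleMean_le_oscBound ((hf.contDiff.of_le one_le_two).pow p)
          (hf.periodic.comp fun y => y ^ p) θ
    _ ≤ (oscBound fun x => f x ^ p) * (powMean p f * invMean f ^ p) :=
        le_mul_of_one_le_right (oscBound_nonneg _)
          (one_le_powMean_mul_invMean_pow hf.contDiff.continuous hf.pos p)
    _ = oscRatio p f * powMean p f := by rw [oscRatio]; ring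

lemma isPinched_of_oscRatio_le (hf : IsCurvatureFunction f) {ε : ℝ} (h : oscRatio p f ≤ ε) :
    IsPinched ε p f := fun θ =>
  (hf.isPinched_oscRatio p θ).trans (mul_le_mul_of_nonneg_right h (powMean_pos hf p).le)

lemma abs_inv_invMean_mul_sub_one_le (hf : IsCurvatureFunction f) (hp : p ≠ 0) {ε : ℝ}
    (hε : ε ≤ 1 / 10) (hpinch : IsPinched ε p f) (θ : ℝ) :
    |(invMean f * f θ)⁻¹ - 1| ≤ 5 * ε := by
  obtain ⟨c, u, hc, hu, hA, rfl⟩ := hf.exists_eq_const_mul_powMean_eq_one hp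
  rw [isPinched_const_mul_iff _ p hc] at hpinch
  have near_one (x : ℝ) : |(u x)⁻¹ - 1| ≤ 2 * ε :=
    (abs_inv_sub_one_le_two_mul_abs_pow_sub_one hp (hu.pos x)
      ((hpinch.abs_pow_sub_one_le hA x).trans (by linarith))).trans
      (by linarith [hpinch.abs_pow_sub_one_le hA x])
  have hinv : Continuous fun x => (u x)⁻¹ := hu.contDiff.continuous.inv₀ fun x => (hu.pos x).ne'
  have mean_lower : 1 - 2 * ε ≤ invMean u := by
    rw [← circleMean_const (1 - 2 * ε)]
    exact circleMean_mono continuous_const hinv fun x => by linarith [(abs_le.1 (near_one x)).1]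
  have mean_upper : invMean u ≤ 1 + 2 * ε := by
    rw [← circleMean_const (1 + 2 * ε)]
    exact circleMean_mono hinv continuous_const fun x => by linarith [(abs_le.1 (near_one x)).2]
  have hL : 0 < invMean u := hu.invMean_pos
  have scale : (invMean (fun θ => c * u θ) * (c * u θ))⁻¹ - 1
      = ((u θ)⁻¹ - invMean u) / invMean u := by
    have := hu.pos θ
    rw [invMean_const_mul]
    field_simp
  rw [scale, abs_div, abs_of_pos hL, div_le_iff₀ hL]
  have near_mean : |(u θ)⁻¹ - invMean u| ≤ 4 * ε := by
    have := abs_le.1 (near_one θ)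
    exact abs_le.2 ⟨by linarith, by linarith⟩
  nlinarith

lemma mul_invMean_le_two (hf : IsCurvatureFunction f) (hp : p ≠ 0)
    (hω : oscRatio p f ≤ 1 / 10) (θ : ℝ) : f θ * invMean f ≤ 2 := by
  rw [mul_comm]
  exact le_two_of_abs_inv_sub_one_le (mul_pos hf.invMean_pos (hf.pos θ))
    ((hf.abs_inv_invMean_mul_sub_one_le hp hω (hf.isPinched_oscRatio p) θ).trans (by linarith))

lemma powMean_mul_invMean_pow_le (hf : IsCurvatureFunction f) (hp : p ≠ 0)
    (hω : oscRatio p f ≤ 1 / 10) (q : ℕ) :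
    powMean q f * invMean f ^ q ≤ 1 + 4 ^ q * (5 * oscRatio p f) ^ 2 := by
  have hcont := hf.contDiff.continuous
  rw [mul_comm, ← powMean_const_mul]
  exact powMean_le_of_invMean_eq_one (by fun_prop) (fun θ => mul_pos hf.invMean_pos (hf.pos θ))
    (invMean_invMean_mul hcont hf.pos) (by linarith)
    (hf.abs_inv_invMean_mul_sub_one_le hp hω (hf.isPinched_oscRatio p)) q

end IsCurvatureFunction

/-! ### Initial data -/

section InitialData

variable {ψ : ℝ → ℝ} {p : ℕ}

lemma norm_fCoeff_le (hψ : Continuous ψ) (n : ℤ) :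
    ‖fCoeff ψ n‖ ≤ √(circleMean fun θ => ψ θ ^ 2) :=
  Real.le_sqrt_of_sq_le (le_hasSum (hasSum_sq_norm_fCoeff hψ) n fun _ _ => by positivity)

lemma exists_sq_mul_norm_fCoeff_le (hψ : ContDiff ℝ 2 ψ) (hper : Function.Periodic ψ (2 * π)) :
    ∃ B, ∀ n : ℤ, (n : ℝ) ^ 2 * ‖fCoeff ψ n‖ ≤ B := by
  have hψ' : ContDiff ℝ 1 (deriv ψ) := hψ.deriv' (n := 1)
  refine ⟨_, fun n => le_trans (le_of_eq ?_) (norm_fCoeff_le (hψ'.continuous_deriv le_rfl) n)⟩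
  rw [fCoeff_deriv hψ' (periodic_deriv hper), fCoeff_deriv (hψ.of_le one_le_two) hper]
  simp [← mul_assoc, ← sq]

lemma sq_mul_abs_re_fCoeff_le_seminorm2 (hψ : ContDiff ℝ 2 ψ)
    (hper : Function.Periodic ψ (2 * π)) (n : ℤ) :
    (n : ℝ) ^ 2 * |(fCoeff ψ n).re| ≤ seminorm2 ψ := by
  obtain ⟨B, hB⟩ := exists_sq_mul_norm_fCoeff_le hψ hper
  have bdd : BddAbove (range fun n : ℤ => (n : ℝ) ^ 2 * |(fCoeff ψ n).re|) := by
    refine ⟨B, forall_mem_range.2 fun m => le_trans ?_ (hB m)⟩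
    gcongr
    exact Complex.abs_re_le_norm _
  exact (le_ciSup bdd n).trans (le_max_left _ _)

lemma sq_mul_abs_im_fCoeff_le_seminorm2 (hψ : ContDiff ℝ 2 ψ)
    (hper : Function.Periodic ψ (2 * π)) (n : ℤ) :
    (n : ℝ) ^ 2 * |(fCoeff ψ n).im| ≤ seminorm2 ψ := by
  obtain ⟨B, hB⟩ := exists_sq_mul_norm_fCoeff_le hψ hper
  have bdd : BddAbove (range fun n : ℤ => (n : ℝ) ^ 2 * |(fCoeff ψ n).im|) := by
    refine ⟨B, forall_mem_range.2 fun m => le_trans ?_ (hB m)⟩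
    gcongr
    exact Complex.abs_im_le_norm _
  exact (le_ciSup bdd n).trans (le_max_right _ _)

lemma seminorm2_nonneg (hψ : ContDiff ℝ 2 ψ) (hper : Function.Periodic ψ (2 * π)) :
    0 ≤ seminorm2 ψ := by
  simpa using sq_mul_abs_re_fCoeff_le_seminorm2 hψ hper 0

lemma sq_mul_sq_norm_fCoeff_le (hψ : ContDiff ℝ 2 ψ) (hper : Function.Periodic ψ (2 * π))
    (n : ℤ) : (n : ℝ) ^ 2 * ‖fCoeff ψ n‖ ^ 2 ≤ 2 * seminorm2 ψ ^ 2 * (1 / (n : ℝ) ^ 2) := by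
  rcases eq_or_ne n 0 with rfl | hn
  · simp
  have hn2 : (0 : ℝ) < (n : ℝ) ^ 2 := by positivity
  have re_le : ((n : ℝ) ^ 2 * |(fCoeff ψ n).re|) ^ 2 ≤ seminorm2 ψ ^ 2 := by
    gcongr
    exact sq_mul_abs_re_fCoeff_le_seminorm2 hψ hper n
  have im_le : ((n : ℝ) ^ 2 * |(fCoeff ψ n).im|) ^ 2 ≤ seminorm2 ψ ^ 2 := by
    gcongr
    exact sq_mul_abs_im_fCoeff_le_seminorm2 hψ hper n
  rw [mul_one_div, le_div_iff₀ hn2, ← Complex.normSq_eq_norm_sq, Complex.normSq_apply]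
  rw [mul_pow, sq_abs] at re_le im_le
  linarith

/-- The constant in the Sobolev-type inequality `oscBound_le_fourierConst_mul_seminorm2`. -/
noncomputable def fourierConst : ℝ := 2 * π * √(2 * ∑' n : ℤ, 1 / (n : ℝ) ^ 2)

lemma oscBound_le_fourierConst_mul_seminorm2 (hψ : ContDiff ℝ 2 ψ)
    (hper : Function.Periodic ψ (2 * π)) : oscBound ψ ≤ fourierConst * seminorm2 ψ := by
  have summable : Summable fun n : ℤ => 1 / (n : ℝ) ^ 2 :=
    Real.summable_one_div_int_pow.2 one_lt_two
  have energy_le : dirichletEnergy ψ ≤ 2 * seminorm2 ψ ^ 2 * ∑' n : ℤ, 1 / (n : ℝ) ^ 2 :=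
    hasSum_le (sq_mul_sq_norm_fCoeff_le hψ hper)
      (hasSum_sq_mul_sq_norm_fCoeff (hψ.of_le one_le_two) hper) (summable.hasSum.mul_left _)
  calc oscBound ψ ≤ 2 * π * √((2 * ∑' n : ℤ, 1 / (n : ℝ) ^ 2) * seminorm2 ψ ^ 2) := by
        unfold oscBound
        gcongr
        linarith
    _ = fourierConst * seminorm2 ψ := by
        rw [Real.sqrt_mul' _ (sq_nonneg _), Real.sqrt_sq (seminorm2_nonneg hψ hper), fourierConst]
        ring

lemma oscBound_pow_le (hψ : ContDiff ℝ 1 ψ) {M : ℝ} (hM : ∀ θ, |ψ θ| ≤ M) (p : ℕ) :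
    oscBound (fun θ => ψ θ ^ p) ≤ p * M ^ (p - 1) * oscBound ψ := by
  have hM0 : 0 ≤ M := (abs_nonneg _).trans (hM 0)
  have hcont := hψ.continuous
  have energy_le : dirichletEnergy (fun θ => ψ θ ^ p)
      ≤ (p * M ^ (p - 1)) ^ 2 * dirichletEnergy ψ := by
    have chain (θ : ℝ) : deriv (fun x => ψ x ^ p) θ = p * ψ θ ^ (p - 1) * deriv ψ θ :=
      deriv_fun_pow (hψ.differentiable one_ne_zero θ) p
    simp only [dirichletEnergy, chain, ← circleMean_const_mul]
    refine circleMean_mono (by fun_prop) (by fun_prop) fun θ => ?_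
    rw [mul_pow, mul_pow, mul_pow, ← sq_abs (ψ θ ^ (p - 1)), abs_pow]
    gcongr
    exact hM θ
  calc oscBound (fun θ => ψ θ ^ p)
      ≤ 2 * π * √((p * M ^ (p - 1)) ^ 2 * dirichletEnergy ψ) := by
        unfold oscBound
        gcongr
    _ = p * M ^ (p - 1) * oscBound ψ := by
        rw [Real.sqrt_mul (sq_nonneg _), Real.sqrt_sq (by positivity), oscBound]
        ring

lemma oscRatio_le_of_oscBound_le (hp : p ≠ 0) (hψ : IsCurvatureFunction ψ) {η : ℝ}
    (hη : η ≤ 1 / 2) (h : oscBound ψ ≤ η * circleMean ψ) : oscRatio p ψ ≤ p * 4 ^ p * η := by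
  have hψ1 : ContDiff ℝ 1 ψ := hψ.contDiff.of_le one_le_two
  set a := circleMean ψ
  have ha : 0 < a := circleMean_pos hψ1.continuous hψ.pos
  have near (θ : ℝ) := abs_le.1 ((abs_sub_circleMean_le_oscBound hψ1 hψ.periodic θ).trans
    (h.trans (by gcongr : η * a ≤ 1 / 2 * a)))
  have upper (θ : ℝ) : |ψ θ| ≤ 2 * a := by
    rw [abs_of_pos (hψ.pos θ)]
    linarith [(near θ).2]
  have lower (θ : ℝ) : (ψ θ)⁻¹ ≤ 2 / a := by
    rw [inv_le_comm₀ (hψ.pos θ) (by positivity), inv_div]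
    linarith [(near θ).1]
  have invMean_le : invMean ψ ≤ 2 / a := by
    rw [← circleMean_const (2 / a)]
    exact circleMean_mono (hψ1.continuous.inv₀ fun θ => (hψ.pos θ).ne') continuous_const lower
  have hη0 : 0 ≤ η := nonneg_of_mul_nonneg_left ((oscBound_nonneg ψ).trans h) ha
  obtain ⟨q, rfl⟩ := Nat.exists_eq_succ_of_ne_zero hp
  have hL : 0 ≤ invMean ψ := hψ.invMean_pos.le
  calc oscRatio (q + 1) ψ ≤ ((q + 1 : ℕ) * (2 * a) ^ q * (η * a)) * (2 / a) ^ (q + 1) := by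
        unfold oscRatio
        gcongr
        exact (oscBound_pow_le hψ1 upper (q + 1)).trans (by rw [Nat.add_sub_cancel]; gcongr)
    _ = (q + 1 : ℕ) * (2 ^ q * 2 ^ (q + 1)) * η := by
        rw [mul_pow, div_pow]
        field_simp
        ring
    _ ≤ (q + 1 : ℕ) * (2 ^ (q + 1) * 2 ^ (q + 1)) * η := by
        gcongr <;> norm_num
    _ = (q + 1 : ℕ) * 4 ^ (q + 1) * η := by rw [← mul_pow]; norm_num

end InitialData

/-! ### Families of functions depending on a parameter -/

section Families

open scoped Topology ContDiff

open Function (uncurry)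

variable {G : ℝ → ℝ → ℝ} {S : Set ℝ} {t : ℝ}

lemma contDiff_slice {n : ℕ∞ω} (hG : ContDiffOn ℝ n (uncurry G) (univ ×ˢ S)) (ht : t ∈ S) :
    ContDiff ℝ n fun θ => G θ t :=
  contDiffOn_univ.1 <| hG.comp (f := fun θ : ℝ => (θ, t)) (by fun_prop) fun _ _ => ⟨mem_univ _, ht⟩

lemma contDiffOn_deriv_slice (hG : ContDiffOn ℝ ∞ (uncurry G) (univ ×ˢ S))
    (hS : UniqueDiffOn ℝ S) :
    ContDiffOn ℝ ∞ (uncurry fun θ t => deriv (fun x => G x t) θ) (univ ×ˢ S) := by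
  have hunique : UniqueDiffOn ℝ (univ ×ˢ S : Set (ℝ × ℝ)) := uniqueDiffOn_univ.prod hS
  refine ((hG.fderivWithin hunique (m := ∞) (by simp)).clm_apply
    (contDiffOn_const (c := ((1 : ℝ), (0 : ℝ))))).congr ?_
  rintro ⟨θ, t⟩ ⟨-, ht⟩
  have hline : HasDerivAt (fun x : ℝ => (x, t)) ((1 : ℝ), (0 : ℝ)) θ :=
    (hasDerivAt_id θ).prodMk (hasDerivAt_const θ t)
  have hfderiv := (hG.differentiableOn (by simp) (θ, t) ⟨mem_univ _, ht⟩).hasFDerivWithinAt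
  have hmaps : MapsTo (fun x : ℝ => (x, t)) univ (univ ×ˢ S) := fun _ _ => ⟨mem_univ _, ht⟩
  have hslice := hfderiv.comp_hasDerivWithinAt θ hline.hasDerivWithinAt hmaps
  exact (hasDerivWithinAt_univ.1 hslice).deriv

lemma contDiffOn_helmholtz_slice (hG : ContDiffOn ℝ ∞ (uncurry G) (univ ×ˢ S))
    (hS : UniqueDiffOn ℝ S) :
    ContDiffOn ℝ ∞ (uncurry fun θ t => helmholtz (fun x => G x t) θ) (univ ×ˢ S) :=
  (contDiffOn_deriv_slice (contDiffOn_deriv_slice hG hS) hS).add hG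

lemma continuousOn_circleMean_slice (hG : ContinuousOn (uncurry G) (univ ×ˢ S)) :
    ContinuousOn (fun t => circleMean fun θ => G θ t) S := by
  rw [continuousOn_iff_continuous_domRestrict]
  refine continuous_const.mul
    (intervalIntegral.continuous_parametric_intervalIntegral_of_continuous' ?_ 0 (2 * π))
  exact hG.comp_continuous (f := fun q : S × ℝ => (q.2, (q.1 : ℝ))) (by fun_prop)
    fun q => ⟨mem_univ _, q.1.2⟩

lemma hasDerivAt_circleMean_slice (hG : ContDiffOn ℝ 1 (uncurry G) (univ ×ˢ S)) (hS : S ∈ 𝓝 t)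
    {d : ℝ → ℝ} (hd : ∀ θ, HasDerivAt (G θ) (d θ) t) :
    HasDerivAt (fun s => circleMean fun θ => G θ s) (circleMean d) t := by
  have hopen : IsOpen (univ ×ˢ interior S : Set (ℝ × ℝ)) := isOpen_univ.prod isOpen_interior
  have hG' : ContDiffOn ℝ 1 (uncurry G) (univ ×ˢ interior S) :=
    hG.mono (prod_mono_right interior_subset)
  set Gt : ℝ → ℝ → ℝ := fun θ s => fderiv ℝ (uncurry G) (θ, s) (0, 1)
  have hGt : ContinuousOn (uncurry Gt) (univ ×ˢ interior S) :=
    (hG'.continuousOn_fderiv_of_isOpen hopen le_rfl).clm_apply continuousOn_const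
  have hasDerivAt_Gt (θ : ℝ) {s : ℝ} (hs : s ∈ interior S) : HasDerivAt (G θ) (Gt θ s) s :=
    ((hG'.differentiableOn one_ne_zero).differentiableAt
      (hopen.mem_nhds (show (θ, s) ∈ _ from ⟨mem_univ _, hs⟩))).hasFDerivAt.comp_hasDerivAt s
      ((hasDerivAt_const s θ).prodMk (hasDerivAt_id s))
  have ht : t ∈ interior S := mem_interior_iff_mem_nhds.2 hS
  obtain rfl : d = fun θ => Gt θ t := funext fun θ => (hd θ).unique (hasDerivAt_Gt θ ht)
  obtain ⟨V, hV, hVS, hVcompact⟩ := local_compact_nhds (isOpen_interior.mem_nhds ht)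
  obtain ⟨C, hC⟩ := ((isCompact_Icc (a := (0 : ℝ)) (b := 2 * π)).prod
    hVcompact).exists_bound_of_continuousOn (hGt.mono (prod_mono (subset_univ _) hVS))
  refine HasDerivAt.const_mul _ (intervalIntegral.hasDerivAt_integral_of_dominated_loc_of_deriv_le
    (F := fun s θ => G θ s) (F' := fun s θ => Gt θ s) (bound := fun _ => C) hV ?_ ?_ ?_ ?_ ?_ ?_).2
  · filter_upwards [hS] with s hs
    exact (contDiff_slice hG hs).continuous.aestronglyMeasurable
  · exact (contDiff_slice hG (interior_subset ht)).continuous.intervalIntegrable _ _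
  · exact (contDiff_slice (contDiffOn_zero.2 hGt) ht).continuous.aestronglyMeasurable
  · refine Eventually.of_forall fun θ hθ s hs => hC (θ, s) ⟨?_, hs⟩
    exact Ioc_subset_Icc_self (uIoc_of_le Real.two_pi_pos.le ▸ hθ)
  · simp
  · exact Eventually.of_forall fun θ _ s hs => hasDerivAt_Gt θ (hVS hs)

lemma wirtingerDeficit_eq {v : ℝ → ℝ} (hv : Continuous v) :
    wirtingerDeficit v = dirichletEnergy v - (circleMean fun θ => v θ ^ 2) + circleMean v ^ 2 := by
  rw [wirtingerDeficit, circleMean_sq_sub_circleMean hv]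
  ring

lemma circleMean_mul_helmholtz {u v : ℝ → ℝ} (hu : ContDiff ℝ 1 u) (hv : ContDiff ℝ 2 v)
    (hu_per : Function.Periodic u (2 * π)) (hv_per : Function.Periodic v (2 * π)) :
    (circleMean fun θ => u θ * helmholtz v θ)
      = (circleMean fun θ => u θ * v θ) - circleMean fun θ => deriv u θ * deriv v θ := by
  have hcu := hu.continuous
  have hcv := hv.continuous
  rw [circleMean_deriv_mul_deriv hu hu_per hv hv_per, sub_neg_eq_add,
    ← circleMean_add (by fun_prop) (by fun_prop)]
  simp only [helmholtz]
  congr 1 with θ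
  ring

-- The polarised form lets one differentiate the deficit of a family in the parameter without
-- interchanging that derivative with the two derivatives in `θ`.
lemma wirtingerDeficit_eq_sub_circleMean_mul {u v : ℝ → ℝ} (hu : ContDiff ℝ 2 u)
    (hv : ContDiff ℝ 2 v) (hu_per : Function.Periodic u (2 * π))
    (hv_per : Function.Periodic v (2 * π)) :
    wirtingerDeficit v = wirtingerDeficit u - circleMean u ^ 2 + circleMean v ^ 2 -
      circleMean fun θ => (v θ - u θ) * (helmholtz v θ + helmholtz u θ) := by
  have hu1 : ContDiff ℝ 1 u := hu.of_le (by norm_num)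
  have hv1 : ContDiff ℝ 1 v := hv.of_le (by norm_num)
  have hcu := hu.continuous
  have hcv := hv.continuous
  have hcHu := continuous_helmholtz hu
  have hcHv := continuous_helmholtz hv
  have expand : (circleMean fun θ => (v θ - u θ) * (helmholtz v θ + helmholtz u θ))
      = ((circleMean fun θ => v θ * helmholtz v θ) - circleMean fun θ => u θ * helmholtz u θ)
        + ((circleMean fun θ => v θ * helmholtz u θ)
          - circleMean fun θ => u θ * helmholtz v θ) := by
    rw [← circleMean_sub (by fun_prop) (by fun_prop), ← circleMean_sub (by fun_prop) (by fun_prop),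
      ← circleMean_add (by fun_prop) (by fun_prop)]
    congr 1 with θ
    ring
  rw [expand, circleMean_mul_helmholtz hv1 hv hv_per hv_per,
    circleMean_mul_helmholtz hu1 hu hu_per hu_per, circleMean_mul_helmholtz hv1 hu hv_per hu_per,
    circleMean_mul_helmholtz hu1 hv hu_per hv_per, wirtingerDeficit_eq hcu, wirtingerDeficit_eq hcv]
  simp only [dirichletEnergy, mul_comm (v _) (u _), mul_comm (deriv v _) (deriv u _), pow_two]
  ring

lemma hasDerivAt_wirtingerDeficit_slice (hG : ContDiffOn ℝ ∞ (uncurry G) (univ ×ˢ S))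
    (hS : UniqueDiffOn ℝ S) (hSt : S ∈ 𝓝 t) (hper : ∀ s, Function.Periodic (G · s) (2 * π))
    {d : ℝ → ℝ} (hd : ∀ θ, HasDerivAt (G θ) (d θ) t) (hd_cont : Continuous d) :
    HasDerivAt (fun s => wirtingerDeficit (G · s))
      (-2 * circleMean fun θ => d θ * (helmholtz (G · t) θ - circleMean (G · t))) t := by
  have ht : t ∈ S := mem_of_mem_nhds hSt
  have hG2 {s : ℝ} (hs : s ∈ S) : ContDiff ℝ 2 (G · s) :=
    contDiff_infty.1 (contDiff_slice hG hs) 2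
  have hconst {F : ℝ → ℝ → ℝ} (hF : ContDiffOn ℝ ∞ (uncurry F) (univ ×ˢ S)) :
      ContDiffOn ℝ ∞ (fun q : ℝ × ℝ => F q.1 t) (univ ×ˢ S) :=
    hF.comp (f := fun q : ℝ × ℝ => (q.1, t)) (by fun_prop) fun _ _ => ⟨mem_univ _, ht⟩
  have hH := contDiffOn_helmholtz_slice hG hS
  have hpair : ContDiffOn ℝ ∞ (uncurry fun θ s =>
      (G θ s - G θ t) * (helmholtz (G · s) θ + helmholtz (G · t) θ)) (univ ×ˢ S) :=
    (hG.sub (hconst hG)).mul (hH.add (hconst hH))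
  have hH_diff (θ : ℝ) : DifferentiableAt ℝ (fun s => helmholtz (G · s) θ) t := by
    have : ContDiffOn ℝ ∞ (fun s => helmholtz (G · s) θ) S :=
      hH.comp (f := fun s : ℝ => (θ, s)) (by fun_prop) fun _ hs => ⟨mem_univ _, hs⟩
    exact (this.differentiableOn (by simp)).differentiableAt hSt
  have hpair_deriv := hasDerivAt_circleMean_slice (d := fun θ => 2 * (d θ * helmholtz (G · t) θ))
    (hpair.of_le (by simp)) hSt fun θ =>
      (((hd θ).sub_const (G θ t)).mul
        ((hH_diff θ).hasDerivAt.add_const (helmholtz (G · t) θ))).congr_deriv (by ring)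
  have hmean_deriv := hasDerivAt_circleMean_slice (hG.of_le (by simp)) hSt hd
  refine HasDerivAt.congr_deriv (((hmean_deriv.fun_pow 2).const_add (wirtingerDeficit (G · t)
    - circleMean (G · t) ^ 2)).sub hpair_deriv |>.congr_of_eventuallyEq ?_) ?_
  · filter_upwards [hSt] with s hs
    exact wirtingerDeficit_eq_sub_circleMean_mul (hG2 ht) (hG2 hs) (hper t) (hper s)
  · have hcH := continuous_helmholtz (hG2 ht)
    simp only [mul_sub, circleMean_const_mul]
    rw [circleMean_sub (by fun_prop) (by fun_prop)]
    simp only [mul_comm (d _) (circleMean _), circleMean_const_mul]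
    push_cast
    ring

end Families

/-! ### Evolution along the flow -/

lemma helmholtz_pow {f : ℝ → ℝ} (hf : ContDiff ℝ 2 f) (p : ℕ) (θ : ℝ) :
    helmholtz (fun x => f x ^ p) θ
      = p * (f θ ^ (p - 1) * deriv (deriv f) θ + (p - 1) * f θ ^ (p - 2) * deriv f θ ^ 2)
        + f θ ^ p := by
  have hf1 (x : ℝ) : HasDerivAt f (deriv f x) x :=
    (hf.differentiable two_ne_zero x).hasDerivAt
  have hf2 : HasDerivAt (deriv f) (deriv (deriv f) θ) θ :=
    ((hf.deriv' (n := 1)).differentiable one_ne_zero θ).hasDerivAt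
  have hderiv : deriv (fun x => f x ^ p) = fun x => p * f x ^ (p - 1) * deriv f x :=
    funext fun x => ((hf1 x).fun_pow p).deriv
  have hderiv2 := ((((hf1 θ).fun_pow (p - 1)).const_mul (p : ℝ)).fun_mul hf2).deriv
  rw [helmholtz, hderiv, hderiv2]
  rcases p with _ | p
  · simp
  · simp only [Nat.add_sub_cancel, Nat.reduceSubDiff]
    push_cast
    ring

namespace IsPCSF

open scoped Topology ContDiff

open Function (uncurry)

variable {p : ℕ} {T t : ℝ} {k : ℝ → ℝ → ℝ} {ψ : ℝ → ℝ}

lemma contDiffOn_pow (h : IsPCSF p T k ψ) (q : ℕ) :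
    ContDiffOn ℝ ∞ (uncurry fun θ t => k θ t ^ q) (univ ×ˢ Ico 0 T) :=
  h.1.pow q

lemma contDiffOn_inv (h : IsPCSF p T k ψ) :
    ContDiffOn ℝ ∞ (uncurry fun θ t => (k θ t)⁻¹) (univ ×ˢ Ico 0 T) :=
  h.1.inv fun q hq => (h.2.2.1 q.1 q.2 hq.2).ne'

lemma isCurvatureFunction (h : IsPCSF p T k ψ) (ht : t ∈ Ico 0 T) :
    IsCurvatureFunction (k · t) := by
  obtain ⟨hsmooth, hper, hpos, -, -, -, -, -, -, hclosing⟩ := h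
  exact ⟨contDiff_infty.1 (contDiff_slice hsmooth ht) 2, fun θ => hper θ t, fun θ => hpos θ t ht,
    hclosing t ht⟩

lemma initial_eq (h : IsPCSF p T k ψ) : (k · 0) = ψ :=
  funext h.2.2.2.2.1

lemma tendsto_iSup (h : IsPCSF p T k ψ) :
    Tendsto (fun t => ⨆ θ : Icc (0 : ℝ) (2 * π), k θ t) (𝓝[<] T) atTop :=
  h.2.2.2.2.2.2.2.2.1

lemma hasDerivAt (h : IsPCSF p T k ψ) (hp : p ≠ 0) (ht : t ∈ Ico 0 T) (θ : ℝ) :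
    HasDerivAt (k θ) (k θ t ^ 2 * ((p : ℝ)⁻¹ * helmholtz (fun x => k x t ^ p) θ)) t := by
  have hp' : (p : ℝ) ≠ 0 := Nat.cast_ne_zero.2 hp
  refine (h.2.2.2.1 θ t ht).congr_deriv ?_
  rw [helmholtz_pow (h.isCurvatureFunction ht).contDiff]
  field_simp

lemma hasDerivAt_pow (h : IsPCSF p T k ψ) (hp : p ≠ 0) (ht : t ∈ Ico 0 T) (θ : ℝ) :
    HasDerivAt (fun s => k θ s ^ p) (k θ t ^ (p + 1) * helmholtz (fun x => k x t ^ p) θ) t := by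
  refine ((h.hasDerivAt hp ht θ).fun_pow p).congr_deriv ?_
  obtain ⟨m, rfl⟩ := Nat.exists_eq_succ_of_ne_zero hp
  simp only [Nat.succ_eq_add_one, Nat.add_sub_cancel]
  field_simp
  ring

lemma hasDerivAt_inv (h : IsPCSF p T k ψ) (hp : p ≠ 0) (ht : t ∈ Ico 0 T) (θ : ℝ) :
    HasDerivAt (fun s => (k θ s)⁻¹) (-(p : ℝ)⁻¹ * helmholtz (fun x => k x t ^ p) θ) t := by
  have hk : k θ t ≠ 0 := ((h.isCurvatureFunction ht).pos θ).ne'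
  refine ((h.hasDerivAt hp ht θ).fun_inv hk).congr_deriv ?_
  field_simp

lemma hasDerivAt_invMean (h : IsPCSF p T k ψ) (hp : p ≠ 0) (ht : t ∈ Ioo 0 T) :
    HasDerivAt (fun s => invMean (k · s)) (-(p : ℝ)⁻¹ * powMean p (k · t)) t := by
  have hk := h.isCurvatureFunction (Ioo_subset_Ico_self ht)
  refine (hasDerivAt_circleMean_slice (h.contDiffOn_inv.of_le (by simp)) (Ico_mem_nhds ht.1 ht.2)
    (h.hasDerivAt_inv hp (Ioo_subset_Ico_self ht))).congr_deriv ?_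
  rw [circleMean_const_mul, circleMean_helmholtz (hk.contDiff.pow p) (hk.periodic.comp (· ^ p)),
    powMean]

lemma hasDerivAt_wirtingerDeficit (h : IsPCSF p T k ψ) (hp : p ≠ 0) (ht : t ∈ Ioo 0 T) :
    HasDerivAt (fun s => wirtingerDeficit fun θ => k θ s ^ p)
      (-2 * deficitDissipation p (k · t)) t := by
  have ht' : t ∈ Ico 0 T := Ioo_subset_Ico_self ht
  have hk := (h.isCurvatureFunction ht').contDiff
  exact hasDerivAt_wirtingerDeficit_slice (h.contDiffOn_pow p) (uniqueDiffOn_Ico 0 T)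
    (Ico_mem_nhds ht.1 ht.2) (fun s θ => congrArg (· ^ p) (h.2.1 θ s)) (h.hasDerivAt_pow hp ht')
    ((hk.continuous.pow (p + 1)).mul (continuous_helmholtz (hk.pow p)))

lemma continuousOn_invMean (h : IsPCSF p T k ψ) :
    ContinuousOn (fun t => invMean (k · t)) (Ico 0 T) :=
  continuousOn_circleMean_slice h.contDiffOn_inv.continuousOn

lemma continuousOn_dirichletEnergy (h : IsPCSF p T k ψ) :
    ContinuousOn (fun t => dirichletEnergy fun θ => k θ t ^ p) (Ico 0 T) :=
  continuousOn_circleMean_slice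
    ((contDiffOn_deriv_slice (h.contDiffOn_pow p) (uniqueDiffOn_Ico 0 T)).pow 2).continuousOn

lemma continuousOn_wirtingerDeficit (h : IsPCSF p T k ψ) :
    ContinuousOn (fun t => wirtingerDeficit fun θ => k θ t ^ p) (Ico 0 T) := by
  refine ((h.continuousOn_dirichletEnergy.sub
    (continuousOn_circleMean_slice (G := fun θ t => (k θ t ^ p) ^ 2)
      ((h.contDiffOn_pow p).pow 2).continuousOn)).add
    ((continuousOn_circleMean_slice (h.contDiffOn_pow p).continuousOn).pow 2)).congr
    fun t ht => wirtingerDeficit_eq ?_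
  exact (h.isCurvatureFunction ht).contDiff.continuous.pow p

lemma continuousOn_oscRatio (h : IsPCSF p T k ψ) :
    ContinuousOn (fun t => oscRatio p (k · t)) (Ico 0 T) :=
  (continuousOn_const.mul h.continuousOn_dirichletEnergy.sqrt).mul (h.continuousOn_invMean.pow p)

lemma antitoneOn_invMean (h : IsPCSF p T k ψ) (hp : p ≠ 0) :
    AntitoneOn (fun t => invMean (k · t)) (Ico 0 T) := by
  refine antitoneOn_of_hasDerivWithinAt_nonpos (convex_Ico 0 T) h.continuousOn_invMean
    (f' := fun t => -(p : ℝ)⁻¹ * powMean p (k · t)) ?_ ?_ <;> rw [interior_Ico] <;> intro t ht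
  · exact (h.hasDerivAt_invMean hp ht).hasDerivWithinAt
  · have := powMean_pos (h.isCurvatureFunction (Ioo_subset_Ico_self ht)) p
    rw [neg_mul]
    exact neg_nonpos.2 (by positivity)

lemma wirtingerDeficit_le_of_isPinched (h : IsPCSF p T k ψ) (hp : p ≠ 0) (ht : t ∈ Ico 0 T)
    (hpinch : ∀ s ∈ Icc 0 t, IsPinched (pinchingConst p) p (k · s)) :
    (wirtingerDeficit fun θ => k θ t ^ p) ≤ wirtingerDeficit fun θ => ψ θ ^ p := by
  have hsub : Icc 0 t ⊆ Ico 0 T := Icc_subset_Ico_right ht.2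
  have hanti : AntitoneOn (fun s => wirtingerDeficit fun θ => k θ s ^ p) (Icc 0 t) := by
    refine antitoneOn_of_hasDerivWithinAt_nonpos (convex_Icc 0 t)
      (h.continuousOn_wirtingerDeficit.mono hsub)
      (f' := fun s => -2 * deficitDissipation p (k · s)) ?_ ?_ <;>
      rw [interior_Icc] <;> intro s hs
    · exact (h.hasDerivAt_wirtingerDeficit hp ⟨hs.1, hs.2.trans ht.2⟩).hasDerivWithinAt
    · have hs' := Ioo_subset_Icc_self hs
      have := (h.isCurvatureFunction (hsub hs')).deficitDissipation_nonneg hp (hpinch s hs')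
      linarith
  have := hanti (left_mem_Icc.2 ht.1) (right_mem_Icc.2 ht.1) ht.1
  simpa only [congrFun h.initial_eq] using this

lemma oscBound_le_of_isPinched (h : IsPCSF p T k ψ) (hp : p ≠ 0) (ht : t ∈ Ico 0 T)
    (hpinch : ∀ s ∈ Icc 0 t, IsPinched (pinchingConst p) p (k · s)) :
    (oscBound fun θ => k θ t ^ p) ≤ 2 * oscBound fun θ => ψ θ ^ p := by
  have hnonneg : 0 ≤ dirichletEnergy fun θ => ψ θ ^ p := circleMean_nonneg fun _ => sq_nonneg _
  have deficit_le : (wirtingerDeficit fun θ => ψ θ ^ p) ≤ dirichletEnergy fun θ => ψ θ ^ p :=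
    sub_le_self _ (circleMean_nonneg fun _ => sq_nonneg _)
  have energy_le := calc (dirichletEnergy fun θ => k θ t ^ p)
      ≤ 2 * wirtingerDeficit fun θ => k θ t ^ p :=
        (h.isCurvatureFunction ht).dirichletEnergy_pow_le hp (hpinch t (right_mem_Icc.2 ht.1))
    _ ≤ 2 ^ 2 * dirichletEnergy fun θ => ψ θ ^ p := by
        linarith [h.wirtingerDeficit_le_of_isPinched hp ht hpinch]
  calc (oscBound fun θ => k θ t ^ p) ≤ 2 * π * √(2 ^ 2 * dirichletEnergy fun θ => ψ θ ^ p) := by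
        unfold oscBound
        gcongr
    _ = 2 * oscBound fun θ => ψ θ ^ p := by
        rw [Real.sqrt_mul (by norm_num), Real.sqrt_sq two_pos.le, oscBound]
        ring

end IsPCSF

/-! ### Preservation of the pinching -/

-- A first time at which `Q = δ` would contradict `hstep`.
lemma forall_lt_of_continuousOn_Ico {Q : ℝ → ℝ} {a b δ : ℝ} (hQ : ContinuousOn Q (Ico a b))
    (ha : Q a < δ) (hstep : ∀ t ∈ Ico a b, (∀ s ∈ Icc a t, Q s ≤ δ) → Q t < δ) :
    ∀ t ∈ Ico a b, Q t < δ := by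
  intro t ht
  by_contra! hQt
  have hQ' : ContinuousOn Q (Icc a t) := hQ.mono (Icc_subset_Ico_right ht.2)
  obtain ⟨m, ⟨hm, hQm⟩, hleast⟩ :=
    (isCompact_Icc.of_isClosed_subset (hQ'.preimage_isClosed_of_isClosed isClosed_Icc isClosed_Ici)
      inter_subset_left).exists_isLeast ⟨t, right_mem_Icc.2 ht.1, hQt⟩
  have before {s : ℝ} (hs : s ∈ Icc a m) (hne : s ≠ m) : Q s < δ := by
    by_contra! h
    exact hne (hs.2.antisymm (hleast ⟨⟨hs.1, hs.2.trans hm.2⟩, h⟩))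
  obtain ⟨s, hs, hQs⟩ := intermediate_value_Icc hm.1 (hQ'.mono (Icc_subset_Icc_right hm.2))
    ⟨ha.le, hQm⟩
  obtain rfl : s = m := by
    by_contra hne
    exact (before hs hne).ne hQs
  refine (hstep s ⟨hm.1, hm.2.trans_lt ht.2⟩ fun r hr => ?_).ne hQs
  rcases eq_or_ne r s with rfl | hne
  exacts [hQs.le, (before hr hne).le]

lemma exists_pos_forall_oscRatio_le {p : ℕ} (hp : p ≠ 0) {ε : ℝ} (hε : 0 < ε) :
    ∃ c > 0, ∀ ψ, IsCurvatureFunction ψ → c * seminorm2 ψ ≤ (fCoeff ψ 0).re →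
      oscRatio p ψ ≤ ε := by
  set η : ℝ := min (1 / 2) (ε / (p * 4 ^ p))
  have hη : 0 < η := by positivity
  have hF : 0 ≤ fourierConst := by unfold fourierConst; positivity
  refine ⟨(fourierConst + 1) / η, by positivity, fun ψ hψ hc => ?_⟩
  rw [fCoeff_zero, Complex.ofReal_re, div_mul_eq_mul_div, div_le_iff₀' hη] at hc
  have hosc : oscBound ψ ≤ η * circleMean ψ :=
    calc oscBound ψ ≤ fourierConst * seminorm2 ψ :=
          oscBound_le_fourierConst_mul_seminorm2 hψ.contDiff hψ.periodic
      _ ≤ (fourierConst + 1) * seminorm2 ψ :=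
          mul_le_mul_of_nonneg_right (by linarith)
            (seminorm2_nonneg hψ.contDiff hψ.periodic)
      _ ≤ η * circleMean ψ := hc
  calc oscRatio p ψ ≤ p * 4 ^ p * η := oscRatio_le_of_oscBound_le hp hψ (min_le_left _ _) hosc
    _ ≤ p * 4 ^ p * (ε / (p * 4 ^ p)) := by gcongr; exact min_le_right _ _
    _ = ε := by field_simp

namespace IsPCSF

variable {p : ℕ} {T t : ℝ} {k : ℝ → ℝ → ℝ} {ψ : ℝ → ℝ}

lemma oscRatio_lt_pinchingConst (h : IsPCSF p T k ψ) (hp : p ≠ 0)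
    (hsmall : 2 * oscRatio p ψ < pinchingConst p) :
    ∀ t ∈ Ico 0 T, oscRatio p (k · t) < pinchingConst p := by
  intro t ht
  have h0 : (0 : ℝ) ∈ Ico 0 T := left_mem_Ico.2 (ht.1.trans_lt ht.2)
  have hψ : IsCurvatureFunction ψ := h.initial_eq ▸ h.isCurvatureFunction h0
  refine forall_lt_of_continuousOn_Ico h.continuousOn_oscRatio ?_ (fun s hs hle => ?_) t ht
  · rw [h.initial_eq]
    linarith [hψ.oscRatio_nonneg p]
  · have hpinch (r : ℝ) (hr : r ∈ Icc 0 s) : IsPinched (pinchingConst p) p (k · r) :=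
      (h.isCurvatureFunction (Icc_subset_Ico_right hs.2 hr)).isPinched_of_oscRatio_le (hle r hr)
    have hL : 0 ≤ invMean (k · s) := (h.isCurvatureFunction hs).invMean_pos.le
    have hmono : invMean (k · s) ≤ invMean ψ := by
      simpa only [h.initial_eq] using h.antitoneOn_invMean hp h0 hs hs.1
    have hosc := oscBound_nonneg fun θ => ψ θ ^ p
    calc oscRatio p (k · s) ≤ 2 * (oscBound fun θ => ψ θ ^ p) * invMean ψ ^ p := by
          unfold oscRatio
          gcongr
          exact h.oscBound_le_of_isPinched hp hs hpinch
      _ = 2 * oscRatio p ψ := by rw [oscRatio, mul_assoc]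
      _ < pinchingConst p := hsmall

lemma oscRatio_lt_one_tenth (h : IsPCSF p T k ψ) (hp : p ≠ 0)
    (hsmall : 2 * oscRatio p ψ < pinchingConst p) (ht : t ∈ Ico 0 T) :
    oscRatio p (k · t) < 1 / 10 :=
  (h.oscRatio_lt_pinchingConst hp hsmall t ht).trans_le ((pinchingConst_le p).trans (by norm_num))

lemma oscRatio_le (h : IsPCSF p T k ψ) (hp : p ≠ 0) (hsmall : 2 * oscRatio p ψ < pinchingConst p)
    (ht : t ∈ Ico 0 T) :
    oscRatio p (k · t) ≤ 2 * (oscBound fun θ => ψ θ ^ p) * invMean (k · t) ^ p := by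
  have hL : 0 ≤ invMean (k · t) := (h.isCurvatureFunction ht).invMean_pos.le
  refine mul_le_mul_of_nonneg_right (h.oscBound_le_of_isPinched hp ht fun s hs => ?_)
    (pow_nonneg hL p)
  have hs' : s ∈ Ico 0 T := Icc_subset_Ico_right ht.2 hs
  exact (h.isCurvatureFunction hs').isPinched_of_oscRatio_le
    (h.oscRatio_lt_pinchingConst hp hsmall s hs').le

end IsPCSF

/-! ### Asymptotics of the means -/

/-- The constant `C` in the estimates `powMean q k * invMean k ^ q ≤ 1 + C * invMean k ^ (2 * p)`,
`q ≤ p`, along a flow starting from `ψ`. -/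
noncomputable def errorConst (p : ℕ) (ψ : ℝ → ℝ) : ℝ :=
  100 * 4 ^ p * (oscBound fun θ => ψ θ ^ p) ^ 2

lemma errorConst_nonneg (p : ℕ) (ψ : ℝ → ℝ) : 0 ≤ errorConst p ψ := by
  unfold errorConst
  positivity

section LimitZero

open scoped Topology

variable {M M' : ℝ → ℝ} {a b m : ℝ}

lemma mul_sub_le_of_hasDerivAt_le_neg (hab : a < b) (hM : ContinuousOn M (Ico a b))
    (hM' : ∀ t ∈ Ioo a b, HasDerivAt M (M' t) t) (hle : ∀ t ∈ Ioo a b, M' t ≤ -m)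
    (hlim : Tendsto M (𝓝[<] b) (𝓝 0)) : m * (b - a) ≤ M a := by
  have hlin : Tendsto (fun s => M s - -m * (s - a)) (𝓝[<] b) (𝓝 (0 - -m * (b - a))) :=
    hlim.sub ((Continuous.tendsto (by fun_prop) b).mono_left nhdsWithin_le_nhds)
  have hint : interior (Ico a b) ⊆ Ioo a b := interior_Ico.subset
  have hbound : ∀ᶠ s in 𝓝[<] b, M s - -m * (s - a) ≤ M a := by
    filter_upwards [Ioo_mem_nhdsLT hab] with s hs
    have := (convex_Ico a b).image_sub_le_mul_sub_of_deriv_le hM (C := -m)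
      (fun t ht => (hM' t (hint ht)).differentiableAt.differentiableWithinAt)
      (fun t ht => (hM' t (hint ht)).deriv.trans_le (hle t (hint ht)))
      a (left_mem_Ico.2 hab) s (Ioo_subset_Ico_self hs) hs.1.le
    linarith
  linarith [le_of_tendsto hlin hbound]

lemma le_mul_sub_of_neg_le_hasDerivAt (hab : a < b) (hM : ContinuousOn M (Ico a b))
    (hM' : ∀ t ∈ Ioo a b, HasDerivAt M (M' t) t) (hle : ∀ t ∈ Ioo a b, -m ≤ M' t)
    (hlim : Tendsto M (𝓝[<] b) (𝓝 0)) : M a ≤ m * (b - a) := by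
  have := mul_sub_le_of_hasDerivAt_le_neg (M := fun t => -M t) (m := -m) hab hM.fun_neg
    (fun t ht => (hM' t ht).fun_neg) (fun t ht => neg_le_neg (hle t ht))
    (by simpa only [neg_zero] using hlim.neg)
  linarith

end LimitZero

namespace IsPCSF

open scoped Topology

variable {p : ℕ} {T t : ℝ} {k : ℝ → ℝ → ℝ} {ψ : ℝ → ℝ}

lemma powMean_mul_invMean_pow_le (h : IsPCSF p T k ψ) (hp : p ≠ 0)
    (hsmall : 2 * oscRatio p ψ < pinchingConst p) (ht : t ∈ Ico 0 T) {q : ℕ} (hq : q ≤ p) :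
    powMean q (k · t) * invMean (k · t) ^ q ≤ 1 + errorConst p ψ * invMean (k · t) ^ (2 * p) := by
  have hk := h.isCurvatureFunction ht
  have hω := hk.oscRatio_nonneg p
  calc powMean q (k · t) * invMean (k · t) ^ q ≤ 1 + 4 ^ q * (5 * oscRatio p (k · t)) ^ 2 :=
        hk.powMean_mul_invMean_pow_le hp (h.oscRatio_lt_one_tenth hp hsmall ht).le q
    _ ≤ 1 + 4 ^ p * (5 * (2 * (oscBound fun θ => ψ θ ^ p) * invMean (k · t) ^ p)) ^ 2 := by
        gcongr
        exacts [by norm_num, h.oscRatio_le hp hsmall ht]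
    _ = 1 + errorConst p ψ * invMean (k · t) ^ (2 * p) := by
        rw [errorConst]
        ring

lemma tendsto_invMean (h : IsPCSF p T k ψ) (hp : p ≠ 0) (hT : 0 < T)
    (hsmall : 2 * oscRatio p ψ < pinchingConst p) :
    Tendsto (fun t => invMean (k · t)) (𝓝[<] T) (𝓝 0) := by
  have hmem : ∀ᶠ t in 𝓝[<] T, t ∈ Ico 0 T :=
    mem_of_superset (Ioo_mem_nhdsLT hT) Ioo_subset_Ico_self
  have : Nonempty (Icc 0 (2 * π)) := ⟨⟨0, left_mem_Icc.2 Real.two_pi_pos.le⟩⟩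
  have hlim := h.tendsto_iSup.const_div_atTop (2 : ℝ)
  refine tendsto_of_tendsto_of_tendsto_of_le_of_le' tendsto_const_nhds hlim ?_ ?_
  · filter_upwards [hmem] with t ht using (h.isCurvatureFunction ht).invMean_pos.le
  · filter_upwards [hmem, h.tendsto_iSup.eventually_gt_atTop 0] with t ht hsup
    have hL := (h.isCurvatureFunction ht).invMean_pos
    rw [le_div_comm₀ hL hsup]
    refine ciSup_le fun θ => (le_div_iff₀ hL).2 ?_
    exact (h.isCurvatureFunction ht).mul_invMean_le_two hp
      (h.oscRatio_lt_one_tenth hp hsmall ht).le θ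

lemma hasDerivAt_invMean_pow (h : IsPCSF p T k ψ) (hp : p ≠ 0) (ht : t ∈ Ioo 0 T) :
    HasDerivAt (fun s => invMean (k · s) ^ (p + 1))
      (-((p + 1) / p * (powMean p (k · t) * invMean (k · t) ^ p))) t := by
  refine ((h.hasDerivAt_invMean hp ht).fun_pow (p + 1)).congr_deriv ?_
  rw [Nat.add_sub_cancel]
  push_cast
  ring

lemma tendsto_invMean_pow (h : IsPCSF p T k ψ) (hp : p ≠ 0) (hT : 0 < T)
    (hsmall : 2 * oscRatio p ψ < pinchingConst p) :
    Tendsto (fun t => invMean (k · t) ^ (p + 1)) (𝓝[<] T) (𝓝 0) := by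
  simpa using (h.tendsto_invMean hp hT hsmall).pow (p + 1)

lemma mul_sub_le_invMean_pow (h : IsPCSF p T k ψ) (hp : p ≠ 0)
    (hsmall : 2 * oscRatio p ψ < pinchingConst p) (ht : t ∈ Ico 0 T) :
    (p + 1) / p * (T - t) ≤ invMean (k · t) ^ (p + 1) := by
  refine mul_sub_le_of_hasDerivAt_le_neg (M := fun t => invMean (k · t) ^ (p + 1)) ht.2
    ((h.continuousOn_invMean.pow _).mono (Ico_subset_Ico_left ht.1))
    (fun s hs => h.hasDerivAt_invMean_pow hp ⟨ht.1.trans_lt hs.1, hs.2⟩) (fun s hs => ?_)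
    (h.tendsto_invMean_pow hp (ht.1.trans_lt ht.2) hsmall)
  have hk := h.isCurvatureFunction (t := s) ⟨ht.1.trans hs.1.le, hs.2⟩
  have := one_le_powMean_mul_invMean_pow hk.contDiff.continuous hk.pos p
  exact neg_le_neg (le_mul_of_one_le_right (by positivity) this)

lemma invMean_pow_le_mul_sub (h : IsPCSF p T k ψ) (hp : p ≠ 0)
    (hsmall : 2 * oscRatio p ψ < pinchingConst p) (ht : t ∈ Ico 0 T) :
    invMean (k · t) ^ (p + 1)
      ≤ (p + 1) / p * (1 + errorConst p ψ * invMean (k · t) ^ (2 * p)) * (T - t) := by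
  have hsub : Ico t T ⊆ Ico 0 T := Ico_subset_Ico_left ht.1
  refine le_mul_sub_of_neg_le_hasDerivAt (M := fun t => invMean (k · t) ^ (p + 1)) ht.2
    ((h.continuousOn_invMean.pow _).mono hsub)
    (fun s hs => h.hasDerivAt_invMean_pow hp ⟨ht.1.trans_lt hs.1, hs.2⟩) (fun s hs => ?_)
    (h.tendsto_invMean_pow hp (ht.1.trans_lt ht.2) hsmall)
  have hs' : s ∈ Ico 0 T := hsub (Ioo_subset_Ico_self hs)
  have hL := (h.isCurvatureFunction hs').invMean_pos
  have hmono : invMean (k · s) ≤ invMean (k · t) := h.antitoneOn_invMean hp ht hs' hs.1.le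
  have hC := errorConst_nonneg p ψ
  refine neg_le_neg (mul_le_mul_of_nonneg_left ?_ (by positivity))
  exact (h.powMean_mul_invMean_pow_le hp hsmall hs' le_rfl).trans (by gcongr)

end IsPCSF

/-! ### The blow-up rate -/

section BlowUpRate

variable {n : ℕ} {B C c e K L σ u x₀ x : ℝ}

lemma rpow_one_div_mul_pow (hn : n ≠ 0) (hc : 0 ≤ c) :
    (c ^ ((1 : ℝ) / n) * K) ^ n = c * K ^ n := by
  rw [mul_pow, one_div, Real.rpow_inv_natCast_pow hc hn]

lemma rpow_one_div_mul_le_rpow_neg_iff (hn : n ≠ 0) (hc : 0 < c) (hK : 0 < K) (hB : 0 < B) :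
    c ^ ((1 : ℝ) / n) * K ≤ B ^ (-((1 : ℝ) / n)) ↔ c * K ^ n * B ≤ 1 := by
  rw [← rpow_one_div_mul_pow hn hc.le, one_div, ← inv_neg,
    Real.le_rpow_inv_iff_of_neg (by positivity) hB (by simpa using hn.bot_lt),
    Real.rpow_neg (by positivity), Real.rpow_natCast, le_inv_comm₀ hB (by positivity),
    ← one_div B, le_div_iff₀ hB]

lemma rpow_neg_le_rpow_one_div_mul_iff (hn : n ≠ 0) (hc : 0 < c) (hK : 0 < K) (hB : 0 < B) :
    B ^ (-((1 : ℝ) / n)) ≤ c ^ ((1 : ℝ) / n) * K ↔ 1 ≤ c * K ^ n * B := by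
  rw [← rpow_one_div_mul_pow hn hc.le, one_div, ← inv_neg,
    Real.rpow_inv_le_iff_of_neg hB (by positivity) (by simpa using hn.bot_lt),
    Real.rpow_neg (by positivity), Real.rpow_natCast, inv_le_comm₀ (by positivity) hB,
    ← one_div B, div_le_iff₀ hB]

lemma pow_two_mul_le_mul_rpow (hn : n ≠ 0) (hx : 0 ≤ x) (hx₀ : x ≤ x₀) (hC : 0 ≤ C)
    (hσ : 0 ≤ σ) (h : x ^ (n + 1) ≤ C * σ) :
    x ^ (2 * n) ≤ x₀ ^ (2 * (n - 1)) * C ^ (2 / ((n : ℝ) + 1)) * σ ^ (2 / ((n : ℝ) + 1)) := by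
  have hsq : x ^ 2 = (x ^ (n + 1)) ^ (2 / ((n : ℝ) + 1)) := by
    rw [← Real.rpow_natCast_mul hx, Nat.cast_add_one, mul_div_cancel₀ _ (by positivity)]
    exact (Real.rpow_two x).symm
  have hx₀_nonneg : 0 ≤ x₀ := hx.trans hx₀
  calc x ^ (2 * n) = x ^ (2 * (n - 1)) * x ^ 2 := by rw [← pow_add]; congr 1; lia
    _ ≤ x₀ ^ (2 * (n - 1)) * (C * σ) ^ (2 / ((n : ℝ) + 1)) := by rw [hsq]; gcongr
    _ = _ := by rw [Real.mul_rpow hC hσ, mul_assoc]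

lemma one_sub_mul_mul_one_add_pow_le_one (hu : 0 ≤ u) (n : ℕ) :
    (1 - n * u) * (1 + u) ^ n ≤ 1 := by
  have h := one_sub_mul_inv_sub_one_le_pow n (inv_pos.2 (by linarith : 0 < 1 + u))
  rw [inv_inv, add_sub_cancel_left, inv_pow, ← one_div] at h
  exact (le_div_iff₀ (by positivity)).1 h

lemma mul_pow_mul_sub_le_one (hK : 0 ≤ K) (hL : 0 ≤ L) (hu : 0 ≤ u) (he : e ≤ 1)
    (hue : n * u ≤ e) (hKL : K * L ≤ 1 + u) (hσ : c * σ ≤ L ^ n) :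
    c * K ^ n * (σ - e * σ) ≤ 1 := by
  have he' : 0 ≤ 1 - e := sub_nonneg.2 he
  have hu' : 0 ≤ 1 - n * u := he'.trans (sub_le_sub_left hue 1)
  calc c * K ^ n * (σ - e * σ) = (1 - e) * (K ^ n * (c * σ)) := by ring
    _ ≤ (1 - e) * (K ^ n * L ^ n) := by gcongr
    _ = (1 - e) * (K * L) ^ n := by rw [mul_pow]
    _ ≤ (1 - n * u) * (1 + u) ^ n := by gcongr
    _ ≤ 1 := one_sub_mul_mul_one_add_pow_le_one hu n

lemma one_le_mul_pow_mul_add (hK : 0 ≤ K) (hcσ : 0 ≤ c * σ) (hue : u ≤ e) (hKL : 1 ≤ K * L)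
    (hσ : L ^ n ≤ c * (1 + u) * σ) : 1 ≤ c * K ^ n * (σ + e * σ) := by
  calc 1 ≤ (K * L) ^ n := one_le_pow₀ hKL
    _ = K ^ n * L ^ n := mul_pow K L n
    _ ≤ K ^ n * (c * (1 + u) * σ) := by gcongr
    _ = K ^ n * (c * σ * (1 + u)) := by ring
    _ ≤ K ^ n * (c * σ * (1 + e)) := by gcongr
    _ = c * K ^ n * (σ + e * σ) := by ring

lemma exists_forall_mul_rpow_lt_one {T : ℝ} {q : ℝ} (hT : 0 < T) (hq : 0 < q) (c : ℝ) :
    ∃ t₀, 0 < t₀ ∧ t₀ < T ∧ ∀ t ∈ Ioo t₀ T, c * (T - t) ^ q < 1 := by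
  have hcont : ContinuousAt (fun t => c * (T - t) ^ q) T :=
    continuousAt_const.mul ((continuousAt_const.sub continuousAt_id).rpow_const (.inr hq.le))
  have hlt : ∀ᶠ t in nhdsWithin T (Iio T), c * (T - t) ^ q < 1 :=
    (hcont.eventually_lt_const (by simp [hq.ne'])).filter_mono nhdsWithin_le_nhds
  obtain ⟨l, hl, hsub⟩ := (mem_nhdsLT_iff_exists_Ioo_subset' hT).1 hlt
  exact ⟨max l (T / 2), by positivity, max_lt hl (by linarith),
    fun t ht => hsub ⟨(le_max_left _ _).trans_lt ht.1, ht.2⟩⟩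

end BlowUpRate

namespace IsPCSF

variable {p : ℕ} {T t e : ℝ} {k : ℝ → ℝ → ℝ} {ψ : ℝ → ℝ}

lemma exists_errorConst_mul_invMean_pow_le (h : IsPCSF p T k ψ) (hp : p ≠ 0) (hT : 0 < T)
    (hsmall : 2 * oscRatio p ψ < pinchingConst p) :
    ∃ c₁ > 0, ∀ t ∈ Ico 0 T, (p + 1) * (errorConst p ψ * invMean (k · t) ^ (2 * p))
      ≤ c₁ * (T - t) ^ (2 / ((p : ℝ) + 1)) := by
  have hC := errorConst_nonneg p ψ
  have h₀ : 0 ∈ Ico 0 T := left_mem_Ico.2 hT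
  have hL₀ := (h.isCurvatureFunction h₀).invMean_pos
  let C := (p + 1) / p * (1 + errorConst p ψ * invMean (k · 0) ^ (2 * p))
  let D := invMean (k · 0) ^ (2 * (p - 1)) * C ^ (2 / ((p : ℝ) + 1))
  refine ⟨(p + 1) * (errorConst p ψ * D) + 1, by positivity, fun t ht => ?_⟩
  have hL := (h.isCurvatureFunction ht).invMean_pos
  have hσ : 0 < T - t := sub_pos.2 ht.2
  have hmono : invMean (k · t) ≤ invMean (k · 0) := h.antitoneOn_invMean hp h₀ ht ht.1
  have hpow : invMean (k · t) ^ (p + 1) ≤ C * (T - t) :=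
    (h.invMean_pow_le_mul_sub hp hsmall ht).trans (by unfold C; gcongr)
  have hdecay : invMean (k · t) ^ (2 * p) ≤ D * (T - t) ^ (2 / ((p : ℝ) + 1)) :=
    pow_two_mul_le_mul_rpow hp hL.le hmono (by positivity) hσ.le hpow
  calc (p + 1) * (errorConst p ψ * invMean (k · t) ^ (2 * p))
      ≤ (p + 1) * (errorConst p ψ * (D * (T - t) ^ (2 / ((p : ℝ) + 1)))) := by gcongr
    _ = (p + 1) * (errorConst p ψ * D) * (T - t) ^ (2 / ((p : ℝ) + 1)) := by ring
    _ ≤ _ := by gcongr; exact le_add_of_nonneg_right zero_le_one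

lemma one_le_circleMean_mul_invMean (h : IsPCSF p T k ψ) (ht : t ∈ Ico 0 T) :
    1 ≤ circleMean (k · t) * invMean (k · t) := by
  have hk := h.isCurvatureFunction ht
  simpa only [powMean, pow_one] using one_le_powMean_mul_invMean_pow hk.contDiff.continuous hk.pos 1

lemma circleMean_mul_invMean_le (h : IsPCSF p T k ψ) (hp : p ≠ 0)
    (hsmall : 2 * oscRatio p ψ < pinchingConst p) (ht : t ∈ Ico 0 T) :
    circleMean (k · t) * invMean (k · t) ≤ 1 + errorConst p ψ * invMean (k · t) ^ (2 * p) := by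
  simpa only [powMean, pow_one]
    using h.powMean_mul_invMean_pow_le hp hsmall ht (Nat.one_le_iff_ne_zero.2 hp)

lemma mul_circleMean_le_rpow_neg_and_rpow_neg_le (h : IsPCSF p T k ψ) (hp : p ≠ 0)
    (hsmall : 2 * oscRatio p ψ < pinchingConst p) (ht : t ∈ Ico 0 T)
    (hle : (p + 1) * (errorConst p ψ * invMean (k · t) ^ (2 * p)) ≤ e) (he : e < 1) :
    ((p + 1 : ℝ) / p) ^ (1 / (p + 1 : ℝ)) * circleMean (k · t)
        ≤ ((T - t) - e * (T - t)) ^ (-(1 / (p + 1 : ℝ))) ∧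
      ((T - t) + e * (T - t)) ^ (-(1 / (p + 1 : ℝ)))
        ≤ ((p + 1 : ℝ) / p) ^ (1 / (p + 1 : ℝ)) * circleMean (k · t) := by
  have hk := h.isCurvatureFunction ht
  have hL := hk.invMean_pos
  have hK := circleMean_pos hk.contDiff.continuous hk.pos
  have hσ : 0 < T - t := sub_pos.2 ht.2
  have hc : 0 < ((p : ℝ) + 1) / p := by positivity
  have hC := errorConst_nonneg p ψ
  have hu : 0 ≤ errorConst p ψ * invMean (k · t) ^ (2 * p) := by positivity
  have hue : errorConst p ψ * invMean (k · t) ^ (2 * p) ≤ e :=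
    (le_mul_of_one_le_left hu (by simp)).trans hle
  have hB : 0 < (T - t) - e * (T - t) := by nlinarith
  have hB' : 0 < (T - t) + e * (T - t) := by nlinarith
  rw [← Nat.cast_add_one] at hc hle ⊢
  rw [rpow_one_div_mul_le_rpow_neg_iff p.succ_ne_zero hc hK hB,
    rpow_neg_le_rpow_one_div_mul_iff p.succ_ne_zero hc hK hB']
  constructor
  · refine mul_pow_mul_sub_le_one hK.le hL.le hu he.le hle
      (h.circleMean_mul_invMean_le hp hsmall ht) ?_
    exact_mod_cast h.mul_sub_le_invMean_pow hp hsmall ht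
  · refine one_le_mul_pow_mul_add hK.le (by positivity) hue
      (h.one_le_circleMean_mul_invMean ht) ?_
    exact_mod_cast h.invMean_pow_le_mul_sub hp hsmall ht

end IsPCSF

/-- There is `c_p > 0` depending only on `p` such that if `ψ̂(0) ≥ c_p ‖ψ‖₂`,
then there are `c₁ > 0` and `t₀ ∈ (0,T)` such that for all `t ∈ (t₀,T)`:
`((p+1)/p)^{1/(p+1)} k̂(0,t) ≤ [(T-t) - c₁(T-t)^{1+2/(p+1)}]^{-1/(p+1)}` and
`((p+1)/p)^{1/(p+1)} k̂(0,t) ≥ [(T-t) + c₁(T-t)^{1+2/(p+1)}]^{-1/(p+1)}`. -/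
theorem statement9 (p : ℕ) (hp : 1 ≤ p) :
    ∃ cp > (0:ℝ), ∀ (T : ℝ), 0 < T → ∀ (k : ℝ → ℝ → ℝ) (ψ : ℝ → ℝ),
      IsPCSF p T k ψ →
      cp * seminorm2 ψ ≤ (fCoeff ψ 0).re →
      ∃ c₁ > (0:ℝ), ∃ t₀ : ℝ, 0 < t₀ ∧ t₀ < T ∧ ∀ t : ℝ, t₀ < t → t < T →
        0 < (T - t) - c₁ * (T - t) ^ (1 + 2 / ((p : ℝ) + 1)) ∧
        (((p : ℝ) + 1) / (p : ℝ)) ^ ((1 : ℝ) / ((p : ℝ) + 1))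
            * (fCoeff (fun θ => k θ t) 0).re
          ≤ ((T - t) - c₁ * (T - t) ^ (1 + 2 / ((p : ℝ) + 1)))
              ^ (-((1 : ℝ) / ((p : ℝ) + 1))) ∧
        ((T - t) + c₁ * (T - t) ^ (1 + 2 / ((p : ℝ) + 1)))
              ^ (-((1 : ℝ) / ((p : ℝ) + 1)))
          ≤ (((p : ℝ) + 1) / (p : ℝ)) ^ ((1 : ℝ) / ((p : ℝ) + 1))
            * (fCoeff (fun θ => k θ t) 0).re := by
  have hp' : p ≠ 0 := Nat.one_le_iff_ne_zero.1 hp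
  have hε := pinchingConst_pos p
  obtain ⟨cp, hcp, hinit⟩ :=
    exists_pos_forall_oscRatio_le hp' (by positivity : 0 < pinchingConst p / 3)
  refine ⟨cp, hcp, fun T hT k ψ h hψ => ?_⟩
  have hψ_curv : IsCurvatureFunction ψ := h.initial_eq ▸ h.isCurvatureFunction (left_mem_Ico.2 hT)
  have hsmall : 2 * oscRatio p ψ < pinchingConst p := by linarith [hinit ψ hψ_curv hψ]
  obtain ⟨c₁, hc₁, hdecay⟩ := h.exists_errorConst_mul_invMean_pow_le hp' hT hsmall
  obtain ⟨t₀, ht₀, ht₀T, hlt⟩ :=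
    exists_forall_mul_rpow_lt_one hT (by positivity : 0 < 2 / ((p : ℝ) + 1)) c₁
  refine ⟨c₁, hc₁, t₀, ht₀, ht₀T, fun t ht htT => ?_⟩
  have hσ : 0 < T - t := sub_pos.2 htT
  have hbracket : c₁ * (T - t) ^ (1 + 2 / ((p : ℝ) + 1))
      = c₁ * (T - t) ^ (2 / ((p : ℝ) + 1)) * (T - t) := by
    rw [Real.rpow_add hσ, Real.rpow_one]
    ring
  have ht_mem : t ∈ Ico 0 T := ⟨(ht₀.trans ht).le, htT⟩
  rw [hbracket, fCoeff_zero, Complex.ofReal_re]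
  exact ⟨by nlinarith [hlt t ⟨ht, htT⟩],
    h.mul_circleMean_le_rpow_neg_and_rpow_neg_le hp' hsmall ht_mem (hdecay t ht_mem)
      (hlt t ⟨ht, htT⟩)⟩
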